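/- arXiv:2506.01030 — 2 statements merged into one kernel-verified Lean document; each statement's English description precedes it below -/
import Mathlib

section
/- Under Condition (★), for every integer h ≥ 2, ∑_{p : N(p) ≤ x} ∑_{k=1}^{h−1} (N(p)^h − N(p)^{h−1})/(N(p)^k·(N(p)^h − 1)) = log log x + ℭ₁ + O_h(1/log x) as x → ∞, where the implied constant depends only on h and the data P, N, κ, θ. -/
open Filter Topology Asymptotics
open scoped Classical

noncomputable section

/-- The norm on the free abelian monoid `P →₀ ℕ`, extended multiplicatively
from the norm `N` on the prime elements. -/
def Nm {P : Type*} (N : P → ℕ) (m : P →₀ ℕ) : ℕ :=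
  m.prod fun p k => N p ^ k

/-- The number of distinct prime elements generating `m`. -/
def omegaM {P : Type*} (m : P →₀ ℕ) : ℕ := m.support.card

/-- `m` is `h`-free: every multiplicity is at most `h - 1`. -/
def HFree {P : Type*} (h : ℕ) (m : P →₀ ℕ) : Prop := ∀ p, m p ≤ h - 1

/-- `m` is `h`-full: every nonzero multiplicity is at least `h`. -/
def HFull {P : Type*} (h : ℕ) (m : P →₀ ℕ) : Prop := ∀ p, m p = 0 ∨ h ≤ m p

/-- Condition (★): `#{m : N(m) ≤ x} = κ·x + O(x^θ)` with `κ > 0`, `0 ≤ θ < 1`. -/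
def StarCond {P : Type*} (N : P → ℕ) (κ θ : ℝ) : Prop :=
  0 < κ ∧ 0 ≤ θ ∧ θ < 1 ∧
    (fun x : ℝ => (({m : P →₀ ℕ | (Nm N m : ℝ) ≤ x}.ncard : ℝ) - κ * x))
      =O[atTop] fun x : ℝ => x ^ θ

/-- The generalized zeta function `ζ_M(s) = ∑_m N(m)^{-s}`. -/
def zetaM {P : Type*} (N : P → ℕ) (s : ℝ) : ℝ :=
  ∑' m : P →₀ ℕ, 1 / (Nm N m : ℝ) ^ s

/-- The constant `γ_h`. -/
def gammah {P : Type*} (N : P → ℕ) (h : ℕ) : ℝ :=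
  ∏' p : P, (1 + ((N p : ℝ) - (N p : ℝ) ^ (1 / (h : ℝ))) /
    ((N p : ℝ) ^ 2 * ((N p : ℝ) ^ (1 / (h : ℝ)) - 1)))

/-- `A` is the Mertens constant `𝔄` of the prime system:
`𝔄 = lim (∑_{N(p) ≤ x} 1/N(p) − log log x)`. -/
def IsMertens {P : Type*} (N : P → ℕ) (A : ℝ) : Prop :=
  Tendsto (fun x : ℝ =>
      (∑ᶠ p ∈ {p : P | (N p : ℝ) ≤ x}, 1 / (N p : ℝ)) - Real.log (Real.log x))
    atTop (𝓝 A)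

/-- The constant `𝔅 = -π²/6`. -/
def Bconst : ℝ := -(Real.pi ^ 2) / 6

/-- The constant `ℭ₁`, given the Mertens constant `A`. -/
def C1const {P : Type*} (N : P → ℕ) (h : ℕ) (A : ℝ) : ℝ :=
  A - ∑' p : P, ((N p : ℝ) - 1) / ((N p : ℝ) * ((N p : ℝ) ^ h - 1))

/-- The constant `ℭ₂`, given the Mertens constant `A`. -/
def C2const {P : Type*} (N : P → ℕ) (h : ℕ) (A : ℝ) : ℝ :=
  C1const N h A ^ 2 + C1const N h A + Bconst -
    ∑' p : P, (((N p : ℝ) ^ (h - 1) - 1) / ((N p : ℝ) ^ h - 1)) ^ 2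

/-- The convergent series `𝔏_h(r)`. -/
def LhSum {P : Type*} (N : P → ℕ) (h : ℕ) (r : ℝ) : ℝ :=
  ∑' p : P, 1 / ((N p : ℝ) ^ (r / (h : ℝ) - 1) *
    ((N p : ℝ) - (N p : ℝ) ^ (1 - 1 / (h : ℝ)) + 1))

/-- The constant `𝔇₁`, given the Mertens constant `A`. -/
def D1const {P : Type*} (N : P → ℕ) (h : ℕ) (A : ℝ) : ℝ :=
  A - Real.log (h : ℝ) + LhSum N h ((h : ℝ) + 1) - LhSum N h (2 * (h : ℝ))

/-- The constant `𝔇₂`, given the Mertens constant `A`. -/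
def D2const {P : Type*} (N : P → ℕ) (h : ℕ) (A : ℝ) : ℝ :=
  D1const N h A ^ 2 + D1const N h A + Bconst -
    ∑' p : P, (1 / ((N p : ℝ) - (N p : ℝ) ^ (1 - 1 / (h : ℝ)) + 1)) ^ 2

/-- The error term `R_{S_h}(x)` for `h`-free counts. -/
def RSfree (h : ℕ) (θ : ℝ) (x : ℝ) : ℝ :=
  if 1 / (h : ℝ) < θ then x ^ θ
  else if 1 / (h : ℝ) = θ then x ^ (1 / (h : ℝ)) * Real.log x
  else x ^ (1 / (h : ℝ))

/-- The error term `R_{N_h}(x)` for `h`-full counts. -/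
def RNfull (h : ℕ) (θ : ℝ) (x : ℝ) : ℝ :=
  if (h : ℝ) / ((h : ℝ) + 1) < θ then x ^ (θ / (h : ℝ))
  else if ∃ i : ℕ, 1 ≤ i ∧ i ≤ h - 1 ∧ θ = (h : ℝ) / ((h : ℝ) + (i : ℝ)) then
    x ^ (1 / ((h : ℝ) + 1)) * Real.log x
  else x ^ (1 / ((h : ℝ) + 1))


open Finset in
theorem abel_gen (c : ℕ → ℝ) (f f' M M' Q H g e : ℝ → ℝ) (x y : ℝ) (hx : 0 ≤ x) (hxy : x ≤ y)
    (hf : ∀ t ∈ Set.Icc x y, HasDerivAt f (f' t) t) (hf' : ContinuousOn f' (Set.Icc x y))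
    (hM : ∀ t ∈ Set.Icc x y, HasDerivAt M (M' t) t) (hM' : ContinuousOn M' (Set.Icc x y))
    (hQ : ∀ t ∈ Set.Icc x y, HasDerivAt Q (f t * M' t) t)
    (hH : ∀ t ∈ Set.Icc x y, HasDerivAt H (- g t) t) (hg : ContinuousOn g (Set.Icc x y))
    (hE : ∀ t ∈ Set.Icc x y, |∑ k ∈ Icc 0 ⌊t⌋₊, c k - M t| ≤ e t)
    (hge : ∀ t ∈ Set.Icc x y, |f' t| * e t ≤ g t) :
    |∑ k ∈ Ioc ⌊x⌋₊ ⌊y⌋₊, f k * c k - (Q y - Q x)| ≤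
      |f y| * e y + |f x| * e x + (H x - H y) := by
  have hu : Set.uIcc x y = Set.Icc x y := Set.uIcc_of_le hxy
  have hfc : ContinuousOn f (Set.Icc x y) := fun t ht => (hf t ht).continuousAt.continuousWithinAt
  have hMc : ContinuousOn M (Set.Icc x y) := fun t ht => (hM t ht).continuousAt.continuousWithinAt
  have hd : Set.EqOn (deriv f) f' (Set.Icc x y) := fun t ht => (hf t ht).deriv
  have hfi : MeasureTheory.IntegrableOn f' (Set.Icc x y) := hf'.integrableOn_Icc
  have hdi : MeasureTheory.IntegrableOn (deriv f) (Set.Icc x y) :=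
    hfi.congr_fun hd.symm measurableSet_Icc
  have h1 := sum_mul_eq_sub_sub_integral_mul c hx hxy (fun t ht => (hf t ht).differentiableAt) hdi
  have h2 : ∫ t in Set.Ioc x y, deriv f t * ∑ k ∈ Icc 0 ⌊t⌋₊, c k =
      ∫ t in x..y, f' t * ∑ k ∈ Icc 0 ⌊t⌋₊, c k := by
    rw [intervalIntegral.integral_of_le hxy]
    apply MeasureTheory.setIntegral_congr_fun measurableSet_Ioc
    intro t ht
    simp only [hd (Set.Ioc_subset_Icc_self ht)]
  have i1 : IntervalIntegrable (fun t => f' t * ∑ k ∈ Icc 0 ⌊t⌋₊, c k) MeasureTheory.volume x y := by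
    rw [intervalIntegrable_iff_integrableOn_Icc_of_le hxy]
    exact integrableOn_mul_sum_Icc c hx hfi
  have i2 : IntervalIntegrable (fun t => f' t * M t) MeasureTheory.volume x y :=
    ContinuousOn.intervalIntegrable (by rw [hu]; exact hf'.mul hMc)
  have i3 : IntervalIntegrable (fun t => f t * M' t) MeasureTheory.volume x y :=
    ContinuousOn.intervalIntegrable (by rw [hu]; exact hfc.mul hM')
  have i4 : IntervalIntegrable g MeasureTheory.volume x y :=
    ContinuousOn.intervalIntegrable (by rw [hu]; exact hg)
  have h3 : ∫ t in x..y, (f' t * M t + f t * M' t) = f y * M y - f x * M x :=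
    intervalIntegral.integral_eq_sub_of_hasDerivAt
      (fun t ht => (hf t (hu ▸ ht)).mul (hM t (hu ▸ ht))) (i2.add i3)
  rw [intervalIntegral.integral_add i2 i3] at h3
  have h4 : ∫ t in x..y, f t * M' t = Q y - Q x :=
    intervalIntegral.integral_eq_sub_of_hasDerivAt (fun t ht => hQ t (hu ▸ ht)) i3
  have h5 : ∫ t in x..y, - g t = H y - H x :=
    intervalIntegral.integral_eq_sub_of_hasDerivAt (fun t ht => hH t (hu ▸ ht)) i4.neg
  rw [intervalIntegral.integral_neg] at h5
  have h6 : ‖∫ t in x..y, (f' t * ∑ k ∈ Icc 0 ⌊t⌋₊, c k - f' t * M t)‖ ≤ ∫ t in x..y, g t := by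
    apply intervalIntegral.norm_integral_le_of_norm_le hxy _ i4
    filter_upwards with t ht
    have ht' := Set.Ioc_subset_Icc_self ht
    rw [← mul_sub, Real.norm_eq_abs, abs_mul]
    exact (mul_le_mul_of_nonneg_left (hE t ht') (abs_nonneg _)).trans (hge t ht')
  rw [intervalIntegral.integral_sub i1 i2, Real.norm_eq_abs] at h6
  have h7 : |f y * (∑ k ∈ Icc 0 ⌊y⌋₊, c k - M y)| ≤ |f y| * e y := by
    rw [abs_mul]; exact mul_le_mul_of_nonneg_left (hE y ⟨hxy, le_rfl⟩) (abs_nonneg _)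
  have h8 : |f x * (∑ k ∈ Icc 0 ⌊x⌋₊, c k - M x)| ≤ |f x| * e x := by
    rw [abs_mul]; exact mul_le_mul_of_nonneg_left (hE x ⟨le_rfl, hxy⟩) (abs_nonneg _)
  rw [h1, h2]
  rw [abs_le] at *
  constructor <;> nlinarith

theorem cauchy_lim (D r : ℝ → ℝ) (hr : Tendsto r atTop (𝓝 0))
    (h : ∀ x y : ℝ, 1 ≤ x → x ≤ y → |D y - D x| ≤ r x) :
    ∃ l : ℝ, ∀ x : ℝ, 1 ≤ x → |D x - l| ≤ r x := by
  have hc : Cauchy (map D atTop) := by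
    rw [Metric.cauchy_iff]
    refine ⟨inferInstance, fun ε hε => ?_⟩
    have := (hr.eventually (gt_mem_nhds (half_pos hε))).and (eventually_ge_atTop 1)
    obtain ⟨x, hx, hx1⟩ := this.exists
    refine ⟨D '' Set.Ici x, image_mem_map (Ici_mem_atTop x), ?_⟩
    rintro _ ⟨a, ha, rfl⟩ _ ⟨b, hb, rfl⟩
    have h1 := h x a hx1 ha
    have h2 := h x b hx1 hb
    rw [Real.dist_eq]
    rw [abs_le] at *
    rw [abs_lt]
    constructor <;> linarith
  obtain ⟨l, hl⟩ := CompleteSpace.complete hc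
  refine ⟨l, fun x hx => ?_⟩
  have hl' : Tendsto D atTop (𝓝 l) := hl
  have : Tendsto (fun y => |D y - D x|) atTop (𝓝 |l - D x|) := (hl'.sub_const _).abs
  rw [abs_sub_comm]
  exact le_of_tendsto this ((eventually_ge_atTop x).mono fun y hy => h x y hx hy)

open Finset in
theorem dsum (f g : ArithmeticFunction ℝ) (F : ℕ → ℝ) (N : ℕ) :
    ∑ n ∈ Ioc 0 N, F n * (f * g) n =
      ∑ n ∈ Ioc 0 N, f n * ∑ m ∈ Ioc 0 (N / n), F (n * m) * g m := by
  have e1 : ∑ n ∈ Ioc 0 N, F n * (f * g) n =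
      ∑ x ∈ Ioc 0 N ×ˢ Ioc 0 N with x.1 * x.2 ≤ N, F (x.1 * x.2) * (f x.1 * g x.2) := by
    simp only [ArithmeticFunction.mul_apply]
    trans ∑ n ∈ Ioc 0 N, ∑ x ∈ Ioc 0 N ×ˢ Ioc 0 N with x.1 * x.2 = n, F (x.1 * x.2) * (f x.1 * g x.2)
    · refine sum_congr rfl fun n hn ↦ ?_
      simp only [mem_Ioc] at hn
      rw [Nat.divisorsAntidiagonal_eq_prod_filter_of_le hn.1.ne' hn.2, mul_sum]
      refine sum_congr rfl fun x hx ↦ ?_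
      rw [(mem_filter.mp hx).2]
    · simp_rw [sum_filter]
      rw [sum_comm]
      exact sum_congr rfl fun _ _ ↦ (by simp_all)
  rw [e1, sum_filter, sum_product]
  refine sum_congr rfl fun n hn ↦ ?_
  simp only [sum_ite, not_le, sum_const_zero, add_zero, mul_sum]
  apply sum_congr
  · ext
    simp only [mem_filter, mem_Ioc, and_assoc, and_congr_right_iff] at hn ⊢
    intro _
    constructor
    · intro ⟨_, h⟩
      grw [← h, Nat.mul_div_cancel_left _ (by lia)]
    · intro hm
      grw [hm]
      simp [Nat.mul_div_le, Nat.div_le_self]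
  · intro m _
    ring

theorem inv_bound (a L b : ArithmeticFunction ℝ) (ha : ∀ n, 0 ≤ a n) (hL : ∀ n, 0 ≤ L n)
    (h1 : a 1 = 1) (hab : a * b = 1) (hlog : ∀ n : ℕ, a n * Real.log n = (a * L) n) (n : ℕ) :
    |b n| ≤ a n := by
  have key : ∀ n : ℕ, b n * Real.log n = - (L * b) n := by
    let D : ArithmeticFunction ℝ → ArithmeticFunction ℝ := fun f => ⟨fun n => f n * Real.log n, by simp⟩
    have hDap : ∀ f (n : ℕ), D f n = f n * Real.log n := fun _ _ => rfl
    clear_value D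
    have hD : ∀ f g, D (f * g) = D f * g + f * D g := by
      intro f g
      ext n
      simp only [hDap, ArithmeticFunction.mul_apply,
        ArithmeticFunction.add_apply, Finset.sum_mul]
      rw [← Finset.sum_add_distrib]
      refine Finset.sum_congr rfl fun x hx => ?_
      have := Nat.mem_divisorsAntidiagonal.mp hx
      rw [← this.1]
      have hx0 : x.1 * x.2 ≠ 0 := this.1 ▸ this.2
      have := mul_ne_zero_iff.mp hx0
      push_cast
      rw [Real.log_mul (by exact_mod_cast this.1) (by exact_mod_cast this.2)]
      ring
    have hDa : D a = a * L := by ext n; rw [hDap]; exact hlog n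
    have hD1 : D 1 = 0 := by
      ext n
      simp only [hDap, ArithmeticFunction.zero_apply]
      by_cases hn : n = 1 <;> simp [hn]
    have h2 := hD a b
    rw [hab, hD1, hDa] at h2
    have h3 : D b = - (L * b) := by
      have : b * (a * L * b + a * D b) = (a * b) * (L * b) + (a * b) * D b := by ring
      rw [← h2, hab] at this
      simp only [mul_zero, one_mul] at this
      exact eq_neg_of_add_eq_zero_right this.symm
    intro n
    have := congrArg (fun f : ArithmeticFunction ℝ => f n) h3
    simpa [hDap] using this
  induction n using Nat.strong_induction_on with
  | _ n ih =>
    rcases Nat.eq_zero_or_pos n with rfl | hn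
    · simp
    rcases Nat.eq_or_lt_of_le hn with h | hn1
    · have hh : (a * b) 1 = 1 := by rw [hab]; simp
      have : b 1 = 1 := by simpa [h1] using hh
      rw [← h, h1]; simp [this]
    have hlp : 0 < Real.log n := Real.log_pos (by exact_mod_cast hn1)
    have hL1 : L 1 = 0 := by
      have := hlog 1
      simpa [h1] using this.symm
    have h5 : |b n| * Real.log n ≤ a n * Real.log n := by
      rw [hlog n, mul_comm a L, ← abs_of_pos hlp, ← abs_mul, key n, abs_neg]
      simp only [ArithmeticFunction.mul_apply]
      refine (Finset.abs_sum_le_sum_abs _ _).trans (Finset.sum_le_sum fun x hx => ?_)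
      rw [abs_mul, abs_of_nonneg (hL _)]
      by_cases hx1 : x.1 = 1
      · simp [hx1, hL1]
      have := Nat.mem_divisorsAntidiagonal.mp hx
      refine mul_le_mul_of_nonneg_left (ih _ ?_) (hL _)
      rw [← this.1]
      have hx0 : x.1 * x.2 ≠ 0 := this.1 ▸ this.2
      have := mul_ne_zero_iff.mp hx0
      have h2 : 2 ≤ x.1 := by have := this.1; omega
      nlinarith [Nat.pos_of_ne_zero this.2]
    exact le_of_mul_le_mul_right h5 hlp

open Finset in
theorem sum_Icc_zero_af (a : ArithmeticFunction ℝ) (N : ℕ) :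
    ∑ k ∈ Icc 0 N, a k = ∑ k ∈ Ioc 0 N, a k := by
  rw [← Finset.sum_Ioc_add_eq_sum_Icc (Nat.zero_le N)]; simp

open Finset in
theorem sum_Ioc_sub (u : ℕ → ℝ) {x y : ℝ} (hxy : x ≤ y) :
    ∑ k ∈ Ioc ⌊x⌋₊ ⌊y⌋₊, u k = ∑ k ∈ Ioc 0 ⌊y⌋₊, u k - ∑ k ∈ Ioc 0 ⌊x⌋₊, u k := by
  have := Finset.sum_Ioc_consecutive u (Nat.zero_le _) (Nat.floor_le_floor hxy)
  linarith

open Finset in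
theorem asym_gen (a : ArithmeticFunction ℝ) (κ θ C s B : ℝ) (hs1 : s < 1)
    (hC : 0 ≤ C) (hB : 0 ≤ B)
    (hE : ∀ t : ℝ, 1 ≤ t → |∑ k ∈ Icc 0 ⌊t⌋₊, a k - κ * t| ≤ C * t ^ θ)
    (f f' Q : ℝ → ℝ)
    (hf : ∀ t : ℝ, 1 ≤ t → HasDerivAt f (f' t) t) (hf' : ContinuousOn f' (Set.Ici 1))
    (hQ : ∀ t : ℝ, 1 ≤ t → HasDerivAt Q (f t * κ) t)
    (b0 : ∀ t : ℝ, 1 ≤ t → |f t| ≤ B * t ^ (s - θ - 1))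
    (b1 : ∀ t : ℝ, 1 ≤ t → |f' t| ≤ B * t ^ (s - θ - 2)) :
    ∃ l C' : ℝ, 0 ≤ C' ∧ ∀ x : ℝ, 1 ≤ x →
      |∑ k ∈ Ioc 0 ⌊x⌋₊, f k * a k - Q x - l| ≤ C' * x ^ (s - 1) := by
  have h1s : 0 < 1 - s := by linarith
  set C' := 2 * (B * C) + B * C / (1 - s) with hC'
  have hBC : 0 ≤ B * C := mul_nonneg hB hC
  have hC'0 : 0 ≤ C' := by positivity
  have key : ∀ x y : ℝ, 1 ≤ x → x ≤ y →
      |(∑ k ∈ Ioc 0 ⌊y⌋₊, f k * a k - Q y) - (∑ k ∈ Ioc 0 ⌊x⌋₊, f k * a k - Q x)|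
        ≤ C' * x ^ (s - 1) := by
    intro x y hx hxy
    have hp : ∀ t ∈ Set.Icc x y, 1 ≤ t := fun t ht => hx.trans ht.1
    have := abel_gen (fun k => a k) f f' (fun t => κ * t) (fun _ => κ) Q
      (fun t => B * C / (1 - s) * t ^ (s - 1)) (fun t => B * C * t ^ (s - 2)) (fun t => C * t ^ θ)
      x y (by linarith) hxy (fun t ht => hf t (hp t ht)) (hf'.mono fun t ht => hp t ht)
      (fun t ht => by simpa using (hasDerivAt_id t).const_mul κ) continuousOn_const
      (fun t ht => hQ t (hp t ht))
      (fun t ht => by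
        have ht1 := hp t ht
        have := (Real.hasDerivAt_rpow_const (x := t) (p := s - 1) (Or.inl (by linarith))).const_mul
          (B * C / (1 - s))
        convert! this using 1
        rw [show s - 1 - 1 = s - 2 by ring]
        field_simp
        ring)
      (fun t ht => by
        have ht1 := hp t ht
        apply ContinuousAt.continuousWithinAt
        exact continuousAt_const.mul (Real.continuousAt_rpow_const _ _ (Or.inl (by linarith))))
      (fun t ht => hE t (hp t ht))
      (fun t ht => by
        have ht1 := hp t ht
        have h0 : (0:ℝ) < t := by linarith
        calc |f' t| * (C * t ^ θ) ≤ (B * t ^ (s - θ - 2)) * (C * t ^ θ) :=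
              mul_le_mul_of_nonneg_right (b1 t ht1) (by positivity)
          _ = B * C * (t ^ (s - θ - 2) * t ^ θ) := by ring
          _ = _ := by rw [← Real.rpow_add h0]; ring_nf)
    have e0 : ∀ t : ℝ, 1 ≤ t → |f t| * (C * t ^ θ) ≤ B * C * t ^ (s - 1) := by
      intro t ht1
      have h0 : (0:ℝ) < t := by linarith
      calc |f t| * (C * t ^ θ) ≤ (B * t ^ (s - θ - 1)) * (C * t ^ θ) :=
              mul_le_mul_of_nonneg_right (b0 t ht1) (by positivity)
          _ = B * C * (t ^ (s - θ - 1) * t ^ θ) := by ring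
          _ = _ := by rw [← Real.rpow_add h0]; ring_nf
    rw [sum_Ioc_sub _ hxy] at this
    have e1 := e0 x hx
    have e2 := e0 y (hx.trans hxy)
    have e3 : y ^ (s - 1) ≤ x ^ (s - 1) :=
      Real.rpow_le_rpow_of_nonpos (by linarith) hxy (by linarith)
    have e4 : B * C * y ^ (s - 1) ≤ B * C * x ^ (s - 1) := mul_le_mul_of_nonneg_left e3 hBC
    have e5 : 0 ≤ B * C / (1 - s) * y ^ (s - 1) := by
      have : 0 < y := by linarith
      positivity
    rw [show (∑ k ∈ Ioc 0 ⌊y⌋₊, f k * a k - Q y) - (∑ k ∈ Ioc 0 ⌊x⌋₊, f k * a k - Q x) =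
      (∑ k ∈ Ioc 0 ⌊y⌋₊, f k * a k - ∑ k ∈ Ioc 0 ⌊x⌋₊, f k * a k) - (Q y - Q x) by ring]
    refine this.trans ?_
    rw [hC']
    linarith
  have hr : Tendsto (fun x : ℝ => C' * x ^ (s - 1)) atTop (𝓝 0) := by
    have := (tendsto_rpow_neg_atTop h1s).const_mul C'
    simpa using this
  obtain ⟨l, hl⟩ := cauchy_lim _ _ hr key
  exact ⟨l, C', hC'0, hl⟩

open Finset in
theorem rpow_sum (a : ArithmeticFunction ℝ) (h1 : a 1 = 1) (C r : ℝ) (hC : 0 ≤ C)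
    (hr : 0 < r) (hr1 : r ≠ 1)
    (hE : ∀ t : ℝ, 1 ≤ t → |∑ k ∈ Icc 0 ⌊t⌋₊, a k| ≤ C * t) (x : ℝ) (hx : 1 ≤ x) :
    ∑ k ∈ Ioc 0 ⌊x⌋₊, (k : ℝ) ^ (-r) * a k ≤
      1 + C * x ^ (1 - r) + C + r * C / (1 - r) * (x ^ (1 - r) - 1) := by
  have hr1' : 1 - r ≠ 0 := sub_ne_zero.mpr hr1.symm
  have hp : ∀ t ∈ Set.Icc 1 x, 1 ≤ t := fun t ht => ht.1
  have := abel_gen (fun k => a k) (fun t => t ^ (-r)) (fun t => -r * t ^ (-r - 1)) (fun t => 0)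
      (fun _ => 0) (fun _ => 0)
      (fun t => - (r * C / (1 - r)) * t ^ (1 - r)) (fun t => r * C * t ^ (-r)) (fun t => C * t)
      1 x (by linarith) hx
      (fun t ht => Real.hasDerivAt_rpow_const (Or.inl (by linarith [hp t ht])))
      (fun t ht => by
        have ht1 := hp t ht
        apply ContinuousAt.continuousWithinAt
        exact continuousAt_const.mul (Real.continuousAt_rpow_const _ _ (Or.inl (by linarith))))
      (fun t ht => hasDerivAt_const _ _) continuousOn_const
      (fun t ht => by simpa using hasDerivAt_const _ _)
      (fun t ht => by
        have ht1 := hp t ht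
        have := (Real.hasDerivAt_rpow_const (x := t) (p := 1 - r) (Or.inl (by linarith))).const_mul
          (- (r * C / (1 - r)))
        convert! this using 1
        rw [show 1 - r - 1 = - r by ring]
        field_simp)
      (fun t ht => by
        have ht1 := hp t ht
        apply ContinuousAt.continuousWithinAt
        exact continuousAt_const.mul (Real.continuousAt_rpow_const _ _ (Or.inl (by linarith))))
      (fun t ht => by simpa using hE t (hp t ht))
      (fun t ht => by
        have ht1 := hp t ht
        have h0 : (0:ℝ) < t := by linarith
        rw [abs_mul, abs_neg, abs_of_pos hr, abs_of_pos (by positivity), Real.rpow_sub_one h0.ne']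
        apply le_of_eq
        field_simp)
  rw [sum_Ioc_sub _ hx] at this
  have h0 : (0:ℝ) < x := by linarith
  simp only [Nat.floor_one, Real.one_rpow, sub_self, sub_zero, abs_one, mul_one, one_mul] at this
  rw [show Ioc 0 1 = {1} from rfl, sum_singleton, abs_of_pos (Real.rpow_pos_of_pos h0 _)] at this
  have h3 := (abs_le.mp this).2
  have h4 : x ^ (-r) * (C * x) = C * x ^ (1 - r) := by
    rw [show 1 - r = -r + 1 by ring, Real.rpow_add_one h0.ne']; ring
  rw [h4] at h3
  simp [h1] at h3
  linarith

open Finset in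
theorem mertens_one (a L : ArithmeticFunction ℝ) (κ θ C : ℝ) (hκ : 0 < κ) (hθ : 0 ≤ θ) (hθ1 : θ < 1)
    (hC : 0 ≤ C) (ha : ∀ n, 0 ≤ a n) (hL : ∀ n, 0 ≤ L n)
    (h1 : a 1 = 1) (hlog : ∀ n : ℕ, a n * Real.log n = (a * L) n)
    (hE : ∀ t : ℝ, 1 ≤ t → |∑ k ∈ Icc 0 ⌊t⌋₊, a k - κ * t| ≤ C * t ^ θ) :
    ∃ R : ℝ, ∀ x : ℝ, 1 ≤ x → |∑ k ∈ Ioc 0 ⌊x⌋₊, (1 / (k : ℝ)) * L k - Real.log x| ≤ R := by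
  obtain ⟨s, hs, hs1⟩ := exists_between hθ1
  obtain ⟨σ, hσ, hσ1⟩ := exists_between hs1
  set ε := s - θ with hε
  have hε0 : 0 < ε := by linarith
  have logle : ∀ (δ : ℝ), 0 < δ → ∀ t : ℝ, 1 ≤ t → 1 + Real.log t ≤ (1 + 1 / δ) * t ^ δ := by
    intro δ hδ t ht
    have h2 := Real.log_le_rpow_div (x := t) (by linarith) hδ
    have h3 : 1 ≤ t ^ δ := Real.one_le_rpow ht hδ.le
    have : (1 + 1 / δ) * t ^ δ = t ^ δ + t ^ δ / δ := by ring
    linarith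
  -- S0
  obtain ⟨c0, C0, hC0, hS0⟩ := asym_gen a κ θ C s 1 hs1 hC zero_le_one hE
    (fun t => 1 / t) (fun t => - 1 / t ^ 2) (fun t => κ * Real.log t)
    (fun t ht => by
      have := (hasDerivAt_inv (x := t) (by linarith))
      simp only [one_div]
      convert! this using 1
      ring)
    (fun t ht => by
      have ht : 1 ≤ t := ht
      apply ContinuousAt.continuousWithinAt
      exact ContinuousAt.div continuousAt_const (by fun_prop) (by positivity))
    (fun t ht => by
      have := (Real.hasDerivAt_log (x := t) (by linarith)).const_mul κ
      convert! this using 1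
      ring)
    (fun t ht => by
      have h0 : (0:ℝ) < t := by linarith
      rw [abs_of_pos (by positivity), one_mul, one_div, ← Real.rpow_neg_one]
      exact Real.rpow_le_rpow_of_exponent_le ht (by linarith))
    (fun t ht => by
      have h0 : (0:ℝ) < t := by linarith
      rw [neg_div, abs_neg, abs_of_pos (by positivity), one_mul, one_div, ← Real.rpow_natCast,
        ← Real.rpow_neg h0.le]
      exact Real.rpow_le_rpow_of_exponent_le ht (by push_cast; linarith))
  obtain ⟨c1, C1, hC1, hS1⟩ := asym_gen a κ θ C s (1 + 1 / ε) hs1 hC (by positivity) hE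
    (fun t => Real.log t / t) (fun t => (1 - Real.log t) / t ^ 2) (fun t => κ / 2 * Real.log t ^ 2)
    (fun t ht => by
      have h0 : (0:ℝ) < t := by linarith
      have := (Real.hasDerivAt_log h0.ne').div (hasDerivAt_id t) h0.ne'
      convert! this using 1
      simp [h0.ne'])
    (fun t ht => by
      have ht : 1 ≤ t := ht
      have h0 : (0:ℝ) < t := by linarith
      apply ContinuousAt.continuousWithinAt
      exact ContinuousAt.div (continuousAt_const.sub (Real.continuousAt_log h0.ne'))
        (by fun_prop) (by positivity))
    (fun t ht => by
      have := ((Real.hasDerivAt_log (x := t) (by linarith)).pow 2).const_mul (κ / 2)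
      convert! this using 1
      simp
      ring)
    (fun t ht => by
      have h0 : (0:ℝ) < t := by linarith
      have hl := Real.log_nonneg ht
      rw [abs_of_nonneg (by positivity), Real.rpow_sub_one h0.ne', ← mul_div_assoc]
      exact div_le_div_of_nonneg_right (by linarith [logle ε hε0 t ht]) h0.le)
    (fun t ht => by
      have h0 : (0:ℝ) < t := by linarith
      have hl := Real.log_nonneg ht
      rw [abs_div, abs_of_pos (a := t ^ 2) (by positivity), Real.rpow_sub h0, ← mul_div_assoc]
      norm_cast
      refine div_le_div_of_nonneg_right ?_ (by positivity)
      have := logle ε hε0 t ht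
      rw [abs_le]; constructor <;> linarith)
  have hAC : ∀ t : ℝ, 1 ≤ t → |∑ k ∈ Icc 0 ⌊t⌋₊, a k| ≤ (κ + C) * t := by
    intro t ht
    have := hE t ht
    have h2 : C * t ^ θ ≤ C * t := by
      refine mul_le_mul_of_nonneg_left ?_ hC
      simpa using Real.rpow_le_rpow_of_exponent_le ht hθ1.le
    have h3 : 0 ≤ κ * t := by positivity
    rw [abs_le] at *
    constructor <;> linarith
  set c := - c0 / κ with hc
  set K := 2 * c1 - c * c0 with hK
  set e := - K / κ with he
  let LL : ℝ → ℝ := fun y => ∑ k ∈ Ioc 0 ⌊y⌋₊, (1 / (k : ℝ)) * L k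
  let F : ℝ → ℝ := fun y => y * (LL y - Real.log y - c) + e
  let G : ℝ → ℝ := fun x => ∑ n ∈ Ioc 0 ⌊x⌋₊, a n * F (x / n)
  -- bound on G
  obtain ⟨D, hD0, hG⟩ : ∃ D : ℝ, 0 ≤ D ∧ ∀ x : ℝ, 1 ≤ x → |G x| ≤ D * x ^ σ := by
    refine ⟨2 * C1 + (1 + |c|) * C0 * (1 + 1 / (σ - s)) + |e| * C, ?_, ?_⟩
    · have : 0 < σ - s := by linarith
      positivity
    intro x hx
    have h0 : (0:ℝ) < x := by linarith
    have t1 : ∑ n ∈ Ioc 0 ⌊x⌋₊, a n * LL (x / n) * (x / n) =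
        x * ∑ n ∈ Ioc 0 ⌊x⌋₊, Real.log n / n * a n := by
      have := dsum a L (fun k => 1 / (k : ℝ)) ⌊x⌋₊
      rw [mul_sum]
      calc _ = x * ∑ n ∈ Ioc 0 ⌊x⌋₊, a n * ∑ m ∈ Ioc 0 (⌊x⌋₊ / n), 1 / ((n * m : ℕ) : ℝ) * L m := by
            rw [mul_sum]
            refine sum_congr rfl fun n hn => ?_
            simp only [LL, Nat.floor_div_natCast]
            rw [mul_sum, mul_sum, mul_sum, sum_mul]
            refine sum_congr rfl fun m hm => ?_
            push_cast
            rw [one_div_mul_eq_div, one_div_mul_eq_div, div_mul_eq_div_div]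
            ring
        _ = _ := by
            rw [← this, mul_sum]
            refine sum_congr rfl fun n hn => ?_
            rw [← hlog n]; ring
    have t2 : G x = x * (2 * (∑ n ∈ Ioc 0 ⌊x⌋₊, Real.log n / n * a n)
        - (Real.log x + c) * ∑ n ∈ Ioc 0 ⌊x⌋₊, 1 / (n : ℝ) * a n) + e * ∑ n ∈ Ioc 0 ⌊x⌋₊, a n := by
      have : G x = ∑ n ∈ Ioc 0 ⌊x⌋₊, a n * LL (x / n) * (x / n) +
          x * (∑ n ∈ Ioc 0 ⌊x⌋₊, Real.log n / n * a n
        - (Real.log x + c) * ∑ n ∈ Ioc 0 ⌊x⌋₊, 1 / (n : ℝ) * a n) + e * ∑ n ∈ Ioc 0 ⌊x⌋₊, a n := by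
        simp only [G, F, mul_sum, mul_sub]
        rw [← sum_sub_distrib, ← sum_add_distrib, ← sum_add_distrib]
        refine sum_congr rfl fun n hn => ?_
        have hn0 : (n:ℝ) ≠ 0 := by have := (mem_Ioc.mp hn).1; positivity
        rw [Real.log_div h0.ne' hn0]
        ring
      rw [this, t1]; ring
    have u0 := hS0 x hx
    have u1 := hS1 x hx
    have u2 := hE x hx
    rw [sum_Icc_zero_af] at u2
    set X0 := ∑ n ∈ Ioc 0 ⌊x⌋₊, 1 / (n : ℝ) * a n
    set X1 := ∑ n ∈ Ioc 0 ⌊x⌋₊, Real.log n / n * a n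
    set X2 := ∑ n ∈ Ioc 0 ⌊x⌋₊, a n
    set l := Real.log x
    have hl : 0 ≤ l := Real.log_nonneg hx
    have t3 : G x = x * (2 * (X1 - κ / 2 * l ^ 2 - c1)) - x * ((l + c) * (X0 - κ * l - c0))
        + e * (X2 - κ * x) := by
      rw [t2, he, hK, hc]
      field_simp
      ring
    have hxs : x * x ^ (s - 1) = x ^ s := by rw [Real.rpow_sub_one h0.ne']; field_simp
    have v1 : |x * (2 * (X1 - κ / 2 * l ^ 2 - c1))| ≤ 2 * C1 * x ^ σ := by
      rw [abs_mul, abs_mul, abs_of_pos h0, abs_two]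
      calc x * (2 * |X1 - κ / 2 * l ^ 2 - c1|) ≤ x * (2 * (C1 * x ^ (s - 1))) := by gcongr
        _ = 2 * C1 * (x * x ^ (s - 1)) := by ring
        _ ≤ _ := by
          rw [hxs]
          gcongr
    have v2 : |x * ((l + c) * (X0 - κ * l - c0))| ≤ (1 + |c|) * C0 * (1 + 1 / (σ - s)) * x ^ σ := by
      rw [abs_mul, abs_mul, abs_of_pos h0]
      have w1 : |l + c| ≤ (1 + |c|) * (1 + l) := by
        have := abs_add_le l c
        rw [abs_of_nonneg hl] at this
        nlinarith [abs_nonneg c]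
      have w2 := logle (σ - s) (by linarith) x hx
      calc x * (|l + c| * |X0 - κ * l - c0|)
          ≤ x * (((1 + |c|) * ((1 + 1 / (σ - s)) * x ^ (σ - s))) * (C0 * x ^ (s - 1))) := by
            gcongr
            exact w1.trans (by gcongr)
        _ = (1 + |c|) * C0 * (1 + 1 / (σ - s)) * (x ^ (σ - s) * (x * x ^ (s - 1))) := by ring
        _ = _ := by rw [hxs, ← Real.rpow_add h0, sub_add_cancel]
    have v3 : |e * (X2 - κ * x)| ≤ |e| * C * x ^ σ := by
      rw [abs_mul, mul_assoc]
      refine mul_le_mul_of_nonneg_left (u2.trans ?_) (abs_nonneg _)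
      gcongr
      linarith
    rw [t3]
    have := abs_add_le (x * (2 * (X1 - κ / 2 * l ^ 2 - c1)) - x * ((l + c) * (X0 - κ * l - c0)))
      (e * (X2 - κ * x))
    have := abs_sub (x * (2 * (X1 - κ / 2 * l ^ 2 - c1))) (x * ((l + c) * (X0 - κ * l - c0)))
    linarith
  obtain ⟨b, hab⟩ : ∃ b, a * b = 1 :=
    (ArithmeticFunction.isUnit_iff_isUnit_apply_one.mpr (by simp [h1])).exists_right_inv
  have hb := inv_bound a L b ha hL h1 hab hlog
  set W := 1 + (κ + C) + (κ + C) + σ * (κ + C) / (1 - σ) with hW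
  have hσ0 : 0 < σ := by linarith
  have h1σ : 0 < 1 - σ := by linarith
  have hF : ∀ x : ℝ, 1 ≤ x → |F x| ≤ D * W * x := by
    intro x hx
    have h0 : (0:ℝ) < x := by linarith
    have t1 : F x = ∑ d ∈ Ioc 0 ⌊x⌋₊, b d * G (x / d) := by
      have := dsum b a (fun k => F (x / k)) ⌊x⌋₊
      rw [mul_comm b a, hab] at this
      rw [sum_eq_single_of_mem 1 (by simp [Nat.one_le_floor_iff, hx])
        (fun n _ hn => by simp [ArithmeticFunction.one_apply_ne hn])] at this
      simp only [Nat.cast_one, div_one, ArithmeticFunction.one_one, mul_one] at this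
      rw [this]
      refine sum_congr rfl fun n hn => ?_
      simp only [G, Nat.floor_div_natCast]
      congr 1
      refine sum_congr rfl fun m hm => ?_
      push_cast
      rw [div_mul_eq_div_div, mul_comm]
    have t2 := rpow_sum a h1 (κ + C) σ (by positivity) hσ0 hσ1.ne hAC x hx
    have hx1 : 1 ≤ x ^ (1 - σ) := Real.one_le_rpow hx h1σ.le
    have t3 : ∑ k ∈ Ioc 0 ⌊x⌋₊, (k : ℝ) ^ (-σ) * a k ≤ W * x ^ (1 - σ) := by
      refine t2.trans ?_
      have : 0 ≤ σ * (κ + C) / (1 - σ) := by positivity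
      rw [hW]
      nlinarith
    rw [t1]
    calc |∑ d ∈ Ioc 0 ⌊x⌋₊, b d * G (x / d)| ≤ ∑ d ∈ Ioc 0 ⌊x⌋₊, |b d * G (x / d)| :=
          abs_sum_le_sum_abs _ _
      _ ≤ ∑ d ∈ Ioc 0 ⌊x⌋₊, D * x ^ σ * ((d : ℝ) ^ (-σ) * a d) := by
          refine sum_le_sum fun d hd => ?_
          have hd := mem_Ioc.mp hd
          have hd0 : (0:ℝ) < d := by exact_mod_cast hd.1
          have hdx : (d:ℝ) ≤ x := (Nat.le_floor_iff h0.le).mp hd.2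
          rw [abs_mul]
          calc |b d| * |G (x / d)| ≤ a d * (D * (x / d) ^ σ) := by
                refine mul_le_mul (hb d) (hG _ ?_) (abs_nonneg _) (ha d)
                rwa [one_le_div hd0]
            _ = _ := by
                rw [Real.div_rpow h0.le hd0.le, Real.rpow_neg hd0.le]; ring
      _ = D * x ^ σ * ∑ d ∈ Ioc 0 ⌊x⌋₊, ((d : ℝ) ^ (-σ) * a d) := by rw [mul_sum]
      _ ≤ D * x ^ σ * (W * x ^ (1 - σ)) := by gcongr
      _ = D * W * (x ^ σ * x ^ (1 - σ)) := by ring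
      _ = _ := by rw [← Real.rpow_add h0]; simp
  refine ⟨D * W + |c| + |e|, fun x hx => ?_⟩
  have h0 : (0:ℝ) < x := by linarith
  have h3 := hF x hx
  have h4 : LL x - Real.log x = F x / x + c - e / x := by
    simp only [F]; field_simp; ring
  have h5 : |F x / x| ≤ D * W := by
    rw [abs_div, abs_of_pos h0, div_le_iff₀ h0]; exact h3
  have h6 : |e / x| ≤ |e| := by
    rw [abs_div, abs_of_pos h0]; exact div_le_self (abs_nonneg _) hx
  change |LL x - Real.log x| ≤ _
  rw [h4]
  have := abs_sub (F x / x + c) (e / x)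
  have := abs_add_le (F x / x) c
  linarith

theorem Nm_add {P : Type*} (N : P → ℕ) (m m' : P →₀ ℕ) : Nm N (m + m') = Nm N m * Nm N m' := by
  unfold Nm
  exact Finsupp.prod_add_index' (by simp) (by intros; rw [pow_add])

theorem Nm_single {P : Type*} (N : P → ℕ) (p : P) (k : ℕ) : Nm N (Finsupp.single p k) = N p ^ k := by
  unfold Nm
  exact Finsupp.prod_single_index (by simp)

theorem Nm_pos {P : Type*} (N : P → ℕ) (hN : ∀ p, 2 ≤ N p) (m : P →₀ ℕ) : 0 < Nm N m := by
  unfold Nm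
  exact Finset.prod_pos fun p _ => pow_pos (by have := hN p; omega) _

theorem Nm_eq_one {P : Type*} (N : P → ℕ) (hN : ∀ p, 2 ≤ N p) {m : P →₀ ℕ} (h : Nm N m = 1) : m = 0 := by
  ext p
  by_contra hp
  have h1 : N p ^ m p ∣ Nm N m := by
    by_cases hs : p ∈ m.support
    · exact Finset.dvd_prod_of_mem (fun p => N p ^ m p) hs
    · simp at hs; simp [hs]
  rw [h] at h1
  have := Nat.dvd_one.mp h1
  have h2 := hN p
  have : 1 < N p ^ m p := Nat.one_lt_pow hp (by omega)
  omega

theorem pow_dvd_Nm {P : Type*} (N : P → ℕ) (m : P →₀ ℕ) (p : P) : N p ^ m p ∣ Nm N m := by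
  by_cases hs : p ∈ m.support
  · exact Finset.dvd_prod_of_mem (fun p => N p ^ m p) hs
  · simp at hs; simp [hs]

theorem log_Nm {P : Type*} (N : P → ℕ) (hN : ∀ p, 2 ≤ N p) (m : P →₀ ℕ) : Real.log (Nm N m) = ∑ p ∈ m.support, m p * Real.log (N p) := by
  unfold Nm Finsupp.prod
  push_cast
  rw [Real.log_prod]
  · simp
  · intro p _
    have := hN p
    have : (N p : ℝ) ≠ 0 := by norm_cast; omega
    positivity


/-- The finite set of monoid elements of norm at most `n`. -/
def Sfin {P : Type*} (N : P → ℕ) (hfin : ∀ n : ℕ, {m : P →₀ ℕ | Nm N m ≤ n}.Finite) (n : ℕ) :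
    Finset (P →₀ ℕ) := (hfin n).toFinset

theorem prime_fin {P : Type*} (N : P → ℕ) (hfin : ∀ n : ℕ, {m : P →₀ ℕ | Nm N m ≤ n}.Finite)
    (n : ℕ) : {p : P | N p ≤ n}.Finite := by
  refine Set.Finite.of_finite_image (f := fun p => Finsupp.single p 1) ((hfin n).subset ?_) ?_
  · rintro _ ⟨p, hp, rfl⟩
    simpa [Nm_single] using hp
  · intro p _ q _ h
    exact Finsupp.single_left_injective one_ne_zero h

/-- The finite set of primes of norm at most `n`. -/
def Prf {P : Type*} (N : P → ℕ) (hfin : ∀ n : ℕ, {m : P →₀ ℕ | Nm N m ≤ n}.Finite) (n : ℕ) :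
    Finset P := (prime_fin N hfin n).toFinset

theorem mem_Sfin {P : Type*} (N : P → ℕ) (hfin : ∀ n : ℕ, {m : P →₀ ℕ | Nm N m ≤ n}.Finite) (n : ℕ)
    (m : P →₀ ℕ) : m ∈ Sfin N hfin n ↔ Nm N m ≤ n := by simp [Sfin]

theorem mem_Prf {P : Type*} (N : P → ℕ) (hfin : ∀ n : ℕ, {m : P →₀ ℕ | Nm N m ≤ n}.Finite) (n : ℕ)
    (p : P) : p ∈ Prf N hfin n ↔ N p ≤ n := by simp [Prf]

/-- The elements of norm exactly `n`. -/
def fib {P : Type*} (N : P → ℕ) (hfin : ∀ n : ℕ, {m : P →₀ ℕ | Nm N m ≤ n}.Finite) (n : ℕ) :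
    Finset (P →₀ ℕ) := (Sfin N hfin n).filter (fun m => Nm N m = n)

theorem mem_fib {P : Type*} (N : P → ℕ) (hfin : ∀ n : ℕ, {m : P →₀ ℕ | Nm N m ≤ n}.Finite) (n : ℕ)
    (m : P →₀ ℕ) : m ∈ fib N hfin n ↔ Nm N m = n := by
  simp [fib, mem_Sfin]
  exact fun h => h.le

/-- Counting function of norms. -/
def cnt {P : Type*} (N : P → ℕ) (hN : ∀ p, 2 ≤ N p)
    (hfin : ∀ n : ℕ, {m : P →₀ ℕ | Nm N m ≤ n}.Finite) : ArithmeticFunction ℝ :=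
  ⟨fun n => ((fib N hfin n).card : ℝ), by
    have : fib N hfin 0 = ∅ := by
      ext m
      simp [mem_fib, (Nm_pos N hN m).ne']
    simp [this]⟩

/-- The von Mangoldt function of the system. -/
def Lam {P : Type*} (N : P → ℕ)
    (hfin : ∀ n : ℕ, {m : P →₀ ℕ | Nm N m ≤ n}.Finite) : ArithmeticFunction ℝ :=
  ⟨fun n => ∑ p ∈ Prf N hfin n, ∑ k ∈ Finset.Icc 1 n,
    if N p ^ k = n then Real.log (N p) else 0, by simp⟩

theorem cnt_apply {P : Type*} (N : P → ℕ) (hN : ∀ p, 2 ≤ N p)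
    (hfin : ∀ n : ℕ, {m : P →₀ ℕ | Nm N m ≤ n}.Finite) (n : ℕ) :
    cnt N hN hfin n = ((fib N hfin n).card : ℝ) := rfl

theorem Lam_apply {P : Type*} (N : P → ℕ)
    (hfin : ∀ n : ℕ, {m : P →₀ ℕ | Nm N m ≤ n}.Finite) (n : ℕ) :
    Lam N hfin n = ∑ p ∈ Prf N hfin n, ∑ k ∈ Finset.Icc 1 n,
    if N p ^ k = n then Real.log (N p) else 0 := rfl

theorem Lam_ext {P : Type*} (N : P → ℕ) (hN : ∀ p, 2 ≤ N p)
    (hfin : ∀ n : ℕ, {m : P →₀ ℕ | Nm N m ≤ n}.Finite) (n X : ℕ) (hX : n ≤ X) :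
    Lam N hfin n = ∑ p ∈ Prf N hfin X, ∑ k ∈ Finset.Icc 1 X,
    if N p ^ k = n then Real.log (N p) else 0 := by
  rw [Lam_apply]
  have key : ∀ p k, 1 ≤ k → N p ^ k = n → N p ≤ n ∧ k ≤ n := by
    intro p k hk h
    rw [← h]
    exact ⟨Nat.le_self_pow (by omega) _, (Nat.lt_pow_self (by have := hN p; omega)).le⟩
  have h1 : ∀ p ∈ Prf N hfin X, p ∉ Prf N hfin n → (∑ k ∈ Finset.Icc 1 X,
      if N p ^ k = n then Real.log (N p) else 0) = 0 := by
    intro p _ hp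
    refine Finset.sum_eq_zero fun k hk => if_neg fun h => hp ?_
    rw [mem_Prf]
    exact (key p k (Finset.mem_Icc.mp hk).1 h).1
  rw [← Finset.sum_subset (fun p hp => ?_) h1]
  · refine Finset.sum_congr rfl fun p _ => ?_
    refine Finset.sum_subset (Finset.Icc_subset_Icc_right hX) fun k hk hk' => if_neg fun h => hk' ?_
    rw [Finset.mem_Icc] at *
    exact ⟨hk.1, (key p k hk.1 h).2⟩
  · rw [mem_Prf] at *
    omega

theorem pk_count {P : Type*} (N : P → ℕ) (hN : ∀ p, 2 ≤ N p)
    (hfin : ∀ n : ℕ, {m : P →₀ ℕ | Nm N m ≤ n}.Finite) (n : ℕ) (hn : n ≠ 0) (p : P) (k : ℕ) :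
    ∑ x ∈ n.divisorsAntidiagonal, (if N p ^ k = x.2 then cnt N hN hfin x.1 else 0) =
      (((fib N hfin n).filter (fun m => k ≤ m p)).card : ℝ) := by
  by_cases hq : N p ^ k ∣ n
  · obtain ⟨d, hd⟩ := hq
    have hqp : 0 < N p ^ k := pow_pos (by have := hN p; omega) _
    rw [Finset.sum_eq_single (d, N p ^ k)]
    · simp only [if_true, cnt_apply]
      norm_cast
      refine Finset.card_bij (fun m _ => m + Finsupp.single p k) ?_ ?_ ?_
      · intro m hm
        rw [mem_fib] at hm
        simp [mem_fib, Nm_add, Nm_single, hm, hd, mul_comm]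
      · intro m _ m' _ h
        exact add_right_cancel h
      · intro m hm
        simp only [Finset.mem_filter, mem_fib] at hm
        have hle : Finsupp.single p k ≤ m := by
          simpa using hm.2
        refine ⟨m - Finsupp.single p k, ?_, tsub_add_cancel_of_le hle⟩
        rw [mem_fib]
        have := Nm_add N (m - Finsupp.single p k) (Finsupp.single p k)
        rw [tsub_add_cancel_of_le hle, hm.1, Nm_single, hd, mul_comm] at this
        exact (Nat.eq_of_mul_eq_mul_right hqp this).symm
    · rintro ⟨u, v⟩ hx hne
      refine if_neg fun h => hne ?_
      have := (Nat.mem_divisorsAntidiagonal.mp hx).1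
      simp only at this h
      rw [← h] at *
      rw [hd, mul_comm (N p ^ k) d] at this
      rw [Nat.eq_of_mul_eq_mul_right hqp this]
    · intro h
      exact absurd (Nat.mem_divisorsAntidiagonal.mpr ⟨by rw [hd, mul_comm], hn⟩) h
  · have h1 : (fib N hfin n).filter (fun m => k ≤ m p) = ∅ := by
      refine Finset.filter_eq_empty_iff.mpr fun m hm hk => hq ?_
      rw [mem_fib] at hm
      rw [← hm]
      exact (pow_dvd_pow _ hk).trans (pow_dvd_Nm N m p)
    rw [h1]
    simp only [Finset.card_empty, Nat.cast_zero]
    refine Finset.sum_eq_zero fun x hx => if_neg fun h => hq ?_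
    have := (Nat.mem_divisorsAntidiagonal.mp hx).1
    rw [h, ← this]
    exact dvd_mul_left _ _

theorem cnt_log {P : Type*} (N : P → ℕ) (hN : ∀ p, 2 ≤ N p)
    (hfin : ∀ n : ℕ, {m : P →₀ ℕ | Nm N m ≤ n}.Finite) (n : ℕ) :
    cnt N hN hfin n * Real.log n = (cnt N hN hfin * Lam N hfin) n := by
  rcases Nat.eq_zero_or_pos n with rfl | hn
  · simp
  have e1 : (cnt N hN hfin * Lam N hfin) n = ∑ p ∈ Prf N hfin n, ∑ k ∈ Finset.Icc 1 n,
      Real.log (N p) * (((fib N hfin n).filter (fun m => k ≤ m p)).card : ℝ) := by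
    simp only [← pk_count N hN hfin n hn.ne']
    rw [ArithmeticFunction.mul_apply]
    have : ∀ x ∈ n.divisorsAntidiagonal, cnt N hN hfin x.1 * Lam N hfin x.2 =
        ∑ p ∈ Prf N hfin n, ∑ k ∈ Finset.Icc 1 n,
          Real.log (N p) * (if N p ^ k = x.2 then cnt N hN hfin x.1 else 0) := by
      intro x hx
      have hx := Nat.mem_divisorsAntidiagonal.mp hx
      have hle : x.2 ≤ n := Nat.le_of_dvd hn ⟨x.1, by rw [mul_comm]; exact hx.1.symm⟩
      rw [Lam_ext N hN hfin x.2 n hle, Finset.mul_sum]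
      refine Finset.sum_congr rfl fun p _ => ?_
      rw [Finset.mul_sum]
      refine Finset.sum_congr rfl fun k _ => ?_
      split_ifs <;> ring
    rw [Finset.sum_congr rfl this, Finset.sum_comm]
    refine Finset.sum_congr rfl fun p _ => ?_
    rw [Finset.sum_comm]
    refine Finset.sum_congr rfl fun k _ => ?_
    rw [Finset.mul_sum]
  have e2 : ∀ m ∈ fib N hfin n, Real.log n = ∑ p ∈ Prf N hfin n, ∑ k ∈ Finset.Icc 1 n,
      (if k ≤ m p then Real.log (N p) else 0) := by
    intro m hm
    rw [mem_fib] at hm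
    have hb : ∀ p, N p ^ m p ≤ n := fun p =>
      Nat.le_of_dvd hn (hm ▸ pow_dvd_Nm N m p)
    rw [← hm, log_Nm N hN, hm]
    rw [Finset.sum_subset (s₂ := Prf N hfin n)]
    · refine Finset.sum_congr rfl fun p _ => ?_
      rw [← Finset.sum_filter, Finset.sum_const, nsmul_eq_mul]
      congr 2
      have hmp : m p ≤ n := (Nat.lt_pow_self (by have := hN p; omega)).le.trans (hb p)
      have : (Finset.Icc 1 n).filter (fun k => k ≤ m p) = Finset.Icc 1 (m p) := by
        ext k; simp; omega
      rw [this]; simp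
    · intro p hp
      rw [mem_Prf]
      exact (Nat.le_self_pow (Finsupp.mem_support_iff.mp hp) _).trans (hb p)
    · intro p _ hp
      rw [Finsupp.notMem_support_iff.mp hp]; simp
  rw [e1, cnt_apply, ← nsmul_eq_mul, ← Finset.sum_const, Finset.sum_congr rfl e2, Finset.sum_comm]
  refine Finset.sum_congr rfl fun p _ => ?_
  rw [Finset.sum_comm]
  refine Finset.sum_congr rfl fun k _ => ?_
  rw [← Finset.sum_filter, Finset.sum_const, nsmul_eq_mul, mul_comm]

theorem cnt_one {P : Type*} (N : P → ℕ) (hN : ∀ p, 2 ≤ N p)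
    (hfin : ∀ n : ℕ, {m : P →₀ ℕ | Nm N m ≤ n}.Finite) : cnt N hN hfin 1 = 1 := by
  have : fib N hfin 1 = {0} := by
    ext m
    rw [mem_fib, Finset.mem_singleton]
    refine ⟨Nm_eq_one N hN, ?_⟩
    rintro rfl
    simp [Nm]
  rw [cnt_apply, this]; simp

theorem Lam_nonneg {P : Type*} (N : P → ℕ)
    (hfin : ∀ n : ℕ, {m : P →₀ ℕ | Nm N m ≤ n}.Finite) (n : ℕ) : 0 ≤ Lam N hfin n := by
  rw [Lam_apply]
  refine Finset.sum_nonneg fun p _ => Finset.sum_nonneg fun k _ => ?_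
  split_ifs
  · exact Real.log_natCast_nonneg _
  · rfl

theorem cnt_sum {P : Type*} (N : P → ℕ) (hN : ∀ p, 2 ≤ N p)
    (hfin : ∀ n : ℕ, {m : P →₀ ℕ | Nm N m ≤ n}.Finite) (t : ℝ) (ht : 0 ≤ t) :
    ∑ k ∈ Finset.Icc 0 ⌊t⌋₊, cnt N hN hfin k = ({m : P →₀ ℕ | (Nm N m : ℝ) ≤ t}.ncard : ℝ) := by
  have h1 : {m : P →₀ ℕ | (Nm N m : ℝ) ≤ t} = (Sfin N hfin ⌊t⌋₊ : Set (P →₀ ℕ)) := by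
    ext m
    simp [mem_Sfin, Nat.le_floor_iff ht]
  rw [h1, Set.ncard_coe_finset,
    Finset.card_eq_sum_card_fiberwise (f := Nm N) (t := Finset.Icc 0 ⌊t⌋₊)]
  · push_cast
    refine Finset.sum_congr rfl fun k hk => ?_
    rw [cnt_apply]
    congr 2
    ext m
    simp only [mem_fib, Finset.mem_filter, mem_Sfin]
    have := (Finset.mem_Icc.mp hk).2
    constructor
    · intro h; exact ⟨by omega, h⟩
    · exact fun h => h.2
  · intro m hm
    simpa [mem_Sfin] using hm

theorem star_fin {P : Type*} (N : P → ℕ) (κ θ : ℝ) (hs : StarCond N κ θ) (n : ℕ) :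
    {m : P →₀ ℕ | Nm N m ≤ n}.Finite := by
  obtain ⟨hκ, hθ, hθ1, hO⟩ := hs
  by_contra hinf
  have h0 : (fun x : ℝ => (({m : P →₀ ℕ | (Nm N m : ℝ) ≤ x}.ncard : ℝ) - κ * x)) =ᶠ[atTop]
      fun x => - κ * x := by
    filter_upwards [eventually_ge_atTop (n : ℝ)] with x hx
    have : {m : P →₀ ℕ | (Nm N m : ℝ) ≤ x}.Infinite := by
      refine Set.Infinite.mono (fun m hm => ?_) hinf
      have : Nm N m ≤ n := hm
      have : (Nm N m : ℝ) ≤ n := by exact_mod_cast this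
      exact this.trans hx
    rw [this.ncard]; simp
  have h1 : (fun x : ℝ => x ^ θ) =o[atTop] fun x : ℝ => x := by
    rw [isLittleO_iff_tendsto' ((eventually_gt_atTop 0).mono fun x hx h => absurd h hx.ne')]
    refine (tendsto_rpow_neg_atTop (y := 1 - θ) (by linarith)).congr' ?_
    filter_upwards [eventually_gt_atTop 0] with x hx
    rw [neg_sub, Real.rpow_sub_one hx.ne']
  have h2 : (fun x : ℝ => - κ * x) =o[atTop] fun x : ℝ => x :=
    (hO.congr' h0 EventuallyEq.rfl).trans_isLittleO h1
  rw [isLittleO_const_mul_left_iff (by simpa using hκ.ne')] at h2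
  exact isLittleO_irrefl (Eventually.frequently
    ((eventually_gt_atTop 0).mono fun x hx => (ne_of_gt hx))) h2

theorem star_bound {P : Type*} (N : P → ℕ) (hN : ∀ p, 2 ≤ N p) (κ θ : ℝ) (hs : StarCond N κ θ)
    (hfin : ∀ n : ℕ, {m : P →₀ ℕ | Nm N m ≤ n}.Finite) :
    ∃ C : ℝ, 0 ≤ C ∧ ∀ t : ℝ, 1 ≤ t →
      |∑ k ∈ Finset.Icc 0 ⌊t⌋₊, cnt N hN hfin k - κ * t| ≤ C * t ^ θ := by
  obtain ⟨hκ, hθ, hθ1, hO⟩ := hs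
  obtain ⟨C, hC⟩ := hO.bound
  obtain ⟨T, hT⟩ := eventually_atTop.mp hC
  set T' := max T 1
  set B := ∑ k ∈ Finset.Icc 0 ⌊T'⌋₊, cnt N hN hfin k with hB
  have hcn : ∀ k, 0 ≤ cnt N hN hfin k := fun k => by rw [cnt_apply]; positivity
  have hB0 : 0 ≤ B := Finset.sum_nonneg fun k _ => hcn k
  have hT0 : 1 ≤ T' := le_max_right _ _
  refine ⟨|C| + (B + κ * T'), by positivity, fun t ht => ?_⟩
  have ht1 : 1 ≤ t ^ θ := Real.one_le_rpow ht hθ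
  have hBT : 0 ≤ B + κ * T' := by positivity
  rcases le_total T' t with h | h
  · have := hT t ((le_max_left _ _).trans h)
    rw [Real.norm_eq_abs, Real.norm_eq_abs, abs_of_nonneg (a := t ^ θ) (by positivity),
      ← cnt_sum N hN hfin t (by linarith)] at this
    nlinarith [le_abs_self C]
  · have h2 : ∑ k ∈ Finset.Icc 0 ⌊t⌋₊, cnt N hN hfin k ≤ B :=
      Finset.sum_le_sum_of_subset_of_nonneg
        (Finset.Icc_subset_Icc_right (Nat.floor_le_floor h)) (fun k _ _ => hcn k)
    have h3 : 0 ≤ ∑ k ∈ Finset.Icc 0 ⌊t⌋₊, cnt N hN hfin k := Finset.sum_nonneg fun k _ => hcn k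
    have h4 : κ * t ≤ κ * T' := by gcongr
    have h5 : 0 ≤ κ * t := by positivity
    have h6 : |∑ k ∈ Finset.Icc 0 ⌊t⌋₊, cnt N hN hfin k - κ * t| ≤ B + κ * T' := by
      rw [abs_le]; constructor <;> linarith
    nlinarith [abs_nonneg C]

/-- Number of primes of norm exactly `n`. -/
def pcnt {P : Type*} (N : P → ℕ) (hfin : ∀ n : ℕ, {m : P →₀ ℕ | Nm N m ≤ n}.Finite) (n : ℕ) : ℝ :=
  (((Prf N hfin n).filter (fun p => N p = n)).card : ℝ)

theorem pcnt_sum {P : Type*} (N : P → ℕ) (hN : ∀ p, 2 ≤ N p)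
    (hfin : ∀ n : ℕ, {m : P →₀ ℕ | Nm N m ≤ n}.Finite) (g : ℕ → ℝ) (X : ℕ) :
    ∑ p ∈ Prf N hfin X, g (N p) = ∑ n ∈ Finset.Ioc 0 X, g n * pcnt N hfin n := by
  rw [← Finset.sum_fiberwise_of_maps_to (g := N) (t := Finset.Ioc 0 X)]
  · refine Finset.sum_congr rfl fun n hn => ?_
    have hn := Finset.mem_Ioc.mp hn
    rw [Finset.sum_congr rfl (g := fun _ => g n)
      (fun p hp => by rw [(Finset.mem_filter.mp hp).2]), Finset.sum_const, nsmul_eq_mul, mul_comm,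
      pcnt]
    congr 3
    ext p
    simp only [Finset.mem_filter, mem_Prf]
    omega
  · intro p hp
    rw [mem_Prf] at hp
    have := hN p
    rw [Finset.mem_Ioc]; omega

theorem pcnt_le {P : Type*} (N : P → ℕ) (hN : ∀ p, 2 ≤ N p)
    (hfin : ∀ n : ℕ, {m : P →₀ ℕ | Nm N m ≤ n}.Finite) (n : ℕ) :
    pcnt N hfin n ≤ cnt N hN hfin n := by
  rw [pcnt, cnt_apply]
  norm_cast
  refine Finset.card_le_card_of_injOn (fun p => Finsupp.single p 1) ?_ ?_
  · intro p hp
    have := (Finset.mem_filter.mp hp).2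
    simp [mem_fib, Nm_single, this]
  · intro p _ q _ h
    exact Finsupp.single_left_injective one_ne_zero h

theorem three_half {P : Type*} (N : P → ℕ) (hN : ∀ p, 2 ≤ N p) (κ θ : ℝ) (hs : StarCond N κ θ)
    (hfin : ∀ n : ℕ, {m : P →₀ ℕ | Nm N m ≤ n}.Finite) :
    ∃ B : ℝ, 0 ≤ B ∧ ∀ T : Finset P, ∑ p ∈ T, (N p : ℝ) ^ (-(3 / 2) : ℝ) ≤ B := by
  obtain ⟨C, hC, hE⟩ := star_bound N hN κ θ hs hfin
  obtain ⟨hκ, hθ, hθ1, -⟩ := hs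
  have hAC : ∀ t : ℝ, 1 ≤ t → |∑ k ∈ Finset.Icc 0 ⌊t⌋₊, cnt N hN hfin k| ≤ (κ + C) * t := by
    intro t ht
    have := hE t ht
    have h2 : C * t ^ θ ≤ C * t := by
      refine mul_le_mul_of_nonneg_left ?_ hC
      simpa using Real.rpow_le_rpow_of_exponent_le ht hθ1.le
    have h3 : 0 ≤ κ * t := by positivity
    rw [abs_le] at *
    constructor <;> linarith
  refine ⟨1 + (κ + C) + (κ + C) + 3 * (κ + C), by positivity, fun T => ?_⟩
  set X := T.sup N + 1
  have hTX : T ⊆ Prf N hfin X := fun p hp => by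
    rw [mem_Prf]
    exact (Finset.le_sup hp).trans (Nat.le_succ _)
  have hX : (1:ℝ) ≤ (X : ℝ) := by simp [X]
  have h1 := rpow_sum (cnt N hN hfin) (cnt_one N hN hfin) (κ + C) (3 / 2) (by positivity)
    (by norm_num) (by norm_num) hAC X hX
  rw [Nat.floor_natCast] at h1
  calc ∑ p ∈ T, (N p : ℝ) ^ (-(3 / 2) : ℝ) ≤ ∑ p ∈ Prf N hfin X, (N p : ℝ) ^ (-(3 / 2) : ℝ) :=
        Finset.sum_le_sum_of_subset_of_nonneg hTX fun p _ _ => by positivity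
    _ = ∑ n ∈ Finset.Ioc 0 X, (n : ℝ) ^ (-(3 / 2) : ℝ) * pcnt N hfin n :=
        pcnt_sum N hN hfin (fun n => (n : ℝ) ^ (-(3 / 2) : ℝ)) X
    _ ≤ ∑ n ∈ Finset.Ioc 0 X, (n : ℝ) ^ (-(3 / 2) : ℝ) * cnt N hN hfin n := by
        refine Finset.sum_le_sum fun n _ => ?_
        gcongr
        exact pcnt_le N hN hfin n
    _ ≤ _ := h1
    _ ≤ _ := by
        have h2 : (X : ℝ) ^ (1 - 3 / 2 : ℝ) ≤ 1 := Real.rpow_le_one_of_one_le_of_nonpos hX (by norm_num)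
        have h3 : 0 ≤ (X : ℝ) ^ (1 - 3 / 2 : ℝ) := by positivity
        have h4 : 0 < κ + C := by positivity
        rw [show (3 / 2 * (κ + C) / (1 - 3 / 2) : ℝ) = - (3 * (κ + C)) by ring]
        nlinarith

theorem geom_sum_eq_aux (n : ℝ) (hn : 2 ≤ n) (X : ℕ) :
    ∑ k ∈ Finset.Icc 1 X, 1 / n ^ k = (1 - 1 / n ^ X) / (n - 1) := by
  have h1 : n - 1 ≠ 0 := by linarith
  have h0 : n ≠ 0 := by linarith
  induction X with
  | zero => simp
  | succ X ih =>
    rw [Finset.sum_Icc_succ_top (by omega), ih]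
    field_simp
    ring

theorem prime_log {P : Type*} (N : P → ℕ) (hN : ∀ p, 2 ≤ N p) (κ θ : ℝ) (hs : StarCond N κ θ)
    (hfin : ∀ n : ℕ, {m : P →₀ ℕ | Nm N m ≤ n}.Finite) :
    ∃ R : ℝ, ∀ x : ℝ, 1 ≤ x →
      |∑ p ∈ Prf N hfin ⌊x⌋₊, Real.log (N p) / N p - Real.log x| ≤ R := by
  obtain ⟨B, hB0, hB⟩ := three_half N hN κ θ hs hfin
  obtain ⟨C, hC, hE⟩ := star_bound N hN κ θ hs hfin
  obtain ⟨hκ, hθ, hθ1, -⟩ := hs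
  obtain ⟨R, hR⟩ := mertens_one (cnt N hN hfin) (Lam N hfin) κ θ C hκ hθ hθ1 hC
    (fun n => by rw [cnt_apply]; positivity) (Lam_nonneg N hfin) (cnt_one N hN hfin)
    (cnt_log N hN hfin) hE
  refine ⟨R + 4 * B, fun x hx => ?_⟩
  have h1 := hR x hx
  set X := ⌊x⌋₊ with hX
  have hX1 : 1 ≤ X := (Nat.one_le_floor_iff x).mpr hx
  have e1 : ∑ k ∈ Finset.Ioc 0 X, (1 / (k : ℝ)) * Lam N hfin k =
      ∑ p ∈ Prf N hfin X, ∑ k ∈ Finset.Icc 1 X,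
        if N p ^ k ≤ X then Real.log (N p) * (1 / (N p : ℝ) ^ k) else 0 := by
    rw [Finset.sum_congr rfl fun n hn => by
      rw [Lam_ext N hN hfin n X (Finset.mem_Ioc.mp hn).2, Finset.mul_sum]]
    rw [Finset.sum_comm]
    refine Finset.sum_congr rfl fun p _ => ?_
    simp only [Finset.mul_sum]
    rw [Finset.sum_comm]
    refine Finset.sum_congr rfl fun k _ => ?_
    have hpos : 0 < N p ^ k := pow_pos (by have := hN p; omega) _
    simp only [mul_ite, mul_zero]
    rw [Finset.sum_ite_eq]
    simp only [Finset.mem_Ioc, hpos, true_and]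
    push_cast
    simp only [mul_comm]
  have lo : ∑ p ∈ Prf N hfin X, Real.log (N p) / N p ≤
      ∑ k ∈ Finset.Ioc 0 X, (1 / (k : ℝ)) * Lam N hfin k := by
    rw [e1]
    refine Finset.sum_le_sum fun p hp => ?_
    rw [mem_Prf] at hp
    have := Finset.single_le_sum (f := fun k => if N p ^ k ≤ X then
      Real.log (N p) * (1 / (N p : ℝ) ^ k) else 0) (s := Finset.Icc 1 X) (fun k _ => by
        have := Real.log_natCast_nonneg (N p)
        split_ifs <;> positivity) (Finset.mem_Icc.mpr ⟨le_rfl, hX1⟩)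
    simp only [pow_one, if_pos hp] at this
    rw [mul_one_div] at this
    exact this
  have hi : ∑ k ∈ Finset.Ioc 0 X, (1 / (k : ℝ)) * Lam N hfin k ≤
      ∑ p ∈ Prf N hfin X, Real.log (N p) / N p + 4 * B := by
    have : ∑ p ∈ Prf N hfin X, 4 * (N p : ℝ) ^ (-(3 / 2) : ℝ) ≤ 4 * B := by
      rw [← Finset.mul_sum]
      have := hB (Prf N hfin X)
      linarith
    refine le_trans ?_ (add_le_add_right this _)
    rw [e1, ← Finset.sum_add_distrib]
    refine Finset.sum_le_sum fun p hp => ?_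
    have hn : (2:ℝ) ≤ N p := by exact_mod_cast hN p
    set n : ℝ := (N p : ℝ) with hnn
    have hl : 0 ≤ Real.log n := Real.log_nonneg (by linarith)
    have h0 : 0 < n := by linarith
    calc _ ≤ ∑ k ∈ Finset.Icc 1 X, Real.log n * (1 / n ^ k) := by
          refine Finset.sum_le_sum fun k _ => ?_
          split_ifs
          · exact le_rfl
          · positivity
      _ = Real.log n * ((1 - 1 / n ^ X) / (n - 1)) := by rw [← Finset.mul_sum, geom_sum_eq_aux n hn]
      _ ≤ Real.log n * (1 / n + 2 / n ^ 2) := by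
          refine mul_le_mul_of_nonneg_left ?_ hl
          have h1 : 0 < n - 1 := by linarith
          have h2 : 0 ≤ 1 / n ^ X := by positivity
          calc (1 - 1 / n ^ X) / (n - 1) ≤ 1 / (n - 1) := by gcongr; linarith
            _ ≤ _ := by
              rw [div_add_div _ _ h0.ne' (by positivity), div_le_div_iff₀ h1 (by positivity)]
              nlinarith [mul_pos h0 h0]
      _ = Real.log n / n + 2 * (Real.log n / n ^ 2) := by ring
      _ ≤ _ := by
          have h3 := Real.log_le_rpow_div h0.le (show (0:ℝ) < 1 / 2 by norm_num)
          have h4 : n ^ (-(3 / 2) : ℝ) = n ^ (1 / 2 : ℝ) / n ^ 2 := by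
            rw [← Real.rpow_natCast, ← Real.rpow_sub h0]; norm_num
          rw [h4]
          have : Real.log n / n ^ 2 ≤ (2 * n ^ (1 / 2 : ℝ)) / n ^ 2 := by
            gcongr
            linarith
          have h5 : (2 * n ^ (1 / 2 : ℝ)) / n ^ 2 = 2 * (n ^ (1 / 2 : ℝ) / n ^ 2) := by ring
          linarith
  rw [abs_le] at *
  constructor <;> linarith

theorem mertens_two {P : Type*} (N : P → ℕ) (hN : ∀ p, 2 ≤ N p) (κ θ : ℝ) (hs : StarCond N κ θ)
    (hfin : ∀ n : ℕ, {m : P →₀ ℕ | Nm N m ≤ n}.Finite) (A : ℝ)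
    (hA : Tendsto (fun x : ℝ => ∑ p ∈ Prf N hfin ⌊x⌋₊, 1 / (N p : ℝ) - Real.log (Real.log x))
      atTop (𝓝 A)) :
    ∃ R : ℝ, ∀ x : ℝ, 2 ≤ x →
      |∑ p ∈ Prf N hfin ⌊x⌋₊, 1 / (N p : ℝ) - Real.log (Real.log x) - A| ≤ R / Real.log x := by
  obtain ⟨R, hR⟩ := prime_log N hN κ θ hs hfin
  refine ⟨2 * R, fun x hx => ?_⟩
  have hR0 : 0 ≤ R := (abs_nonneg _).trans (hR 1 le_rfl)
  have key : ∀ y : ℝ, x ≤ y → |(∑ p ∈ Prf N hfin ⌊y⌋₊, 1 / (N p : ℝ) - Real.log (Real.log y)) -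
      (∑ p ∈ Prf N hfin ⌊x⌋₊, 1 / (N p : ℝ) - Real.log (Real.log x))| ≤ 2 * R / Real.log x := by
    intro y hxy
    have hp : ∀ t ∈ Set.Icc x y, 0 < t ∧ 0 < Real.log t := fun t ht =>
      ⟨by linarith [ht.1], Real.log_pos (by linarith [ht.1])⟩
    have := abel_gen (fun k => Real.log k / k * pcnt N hfin k) (fun t => 1 / Real.log t)
      (fun t => - (1 / (t * Real.log t ^ 2))) (fun t => Real.log t) (fun t => 1 / t)
      (fun t => Real.log (Real.log t)) (fun t => R / Real.log t)
      (fun t => R / (t * Real.log t ^ 2)) (fun _ => R) x y (by linarith) hxy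
      (fun t ht => by
        obtain ⟨h0, hl⟩ := hp t ht
        have := (Real.hasDerivAt_log h0.ne').inv hl.ne'
        simp only [one_div]
        convert! this using 1
        field_simp)
      (fun t ht => by
        obtain ⟨h0, hl⟩ := hp t ht
        apply ContinuousAt.continuousWithinAt
        refine (ContinuousAt.div continuousAt_const (continuousAt_id.mul
          ((Real.continuousAt_log h0.ne').pow 2)) ?_).neg
        exact (mul_pos h0 (pow_pos hl 2)).ne')
      (fun t ht => by
        obtain ⟨h0, hl⟩ := hp t ht
        simpa using Real.hasDerivAt_log h0.ne')
      (fun t ht => by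
        obtain ⟨h0, hl⟩ := hp t ht
        apply ContinuousAt.continuousWithinAt
        exact ContinuousAt.div continuousAt_const continuousAt_id h0.ne')
      (fun t ht => by
        obtain ⟨h0, hl⟩ := hp t ht
        have := (Real.hasDerivAt_log h0.ne').log hl.ne'
        convert! this using 1
        field_simp)
      (fun t ht => by
        obtain ⟨h0, hl⟩ := hp t ht
        have := ((Real.hasDerivAt_log h0.ne').inv hl.ne').const_mul R
        simp only [div_eq_mul_inv]
        convert! this using 1
        field_simp)
      (fun t ht => by
        obtain ⟨h0, hl⟩ := hp t ht
        apply ContinuousAt.continuousWithinAt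
        refine (ContinuousAt.div continuousAt_const (continuousAt_id.mul
          ((Real.continuousAt_log h0.ne').pow 2)) ?_)
        positivity)
      (fun t ht => by
        have := hR t (by linarith [ht.1])
        rw [pcnt_sum N hN hfin (fun n => Real.log n / n)] at this
        rw [← Finset.sum_Ioc_add_eq_sum_Icc (Nat.zero_le _)]
        simpa using this)
      (fun t ht => by
        obtain ⟨h0, hl⟩ := hp t ht
        rw [abs_neg, abs_of_pos (by positivity)]
        apply le_of_eq
        ring)
    have e1 : ∑ k ∈ Finset.Ioc ⌊x⌋₊ ⌊y⌋₊, 1 / Real.log k * (Real.log k / k * pcnt N hfin k) =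
        ∑ p ∈ Prf N hfin ⌊y⌋₊, 1 / (N p : ℝ) - ∑ p ∈ Prf N hfin ⌊x⌋₊, 1 / (N p : ℝ) := by
      rw [pcnt_sum N hN hfin (fun n => 1 / (n : ℝ)), pcnt_sum N hN hfin (fun n => 1 / (n : ℝ)),
        ← sum_Ioc_sub _ hxy]
      refine Finset.sum_congr rfl fun k hk => ?_
      have h2 : 2 ≤ ⌊x⌋₊ := Nat.le_floor (by exact_mod_cast hx)
      have h3 := (Finset.mem_Ioc.mp hk).1
      have h4 : (1:ℝ) < k := by exact_mod_cast (by omega : 1 < k)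
      have h5 := Real.log_pos h4
      field_simp
    rw [e1] at this
    have hlx := (hp x ⟨le_rfl, hxy⟩).2
    have hly := (hp y ⟨hxy, le_rfl⟩).2
    rw [abs_of_pos (a := 1 / Real.log y) (by positivity),
      abs_of_pos (a := 1 / Real.log x) (by positivity)] at this
    have e2 : 1 / Real.log y * R + 1 / Real.log x * R + (R / Real.log x - R / Real.log y) =
      2 * R / Real.log x := by ring
    rw [e2] at this
    convert this using 2
    ring
  have h1 := (hA.sub_const (∑ p ∈ Prf N hfin ⌊x⌋₊, 1 / (N p : ℝ) - Real.log (Real.log x))).abs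
  rw [abs_sub_comm]
  exact le_of_tendsto h1 ((eventually_ge_atTop x).mono key)

theorem local_id (n : ℝ) (hn : 2 ≤ n) (h : ℕ) (hh : 2 ≤ h) :
    ∑ k ∈ Finset.Icc 1 (h - 1), (n ^ h - n ^ (h - 1)) / (n ^ k * (n ^ h - 1)) =
      1 / n - (n - 1) / (n * (n ^ h - 1)) := by
  obtain ⟨j, rfl⟩ : ∃ j, h = j + 1 := ⟨h - 1, by omega⟩
  simp only [Nat.add_sub_cancel]
  have h1 : n - 1 ≠ 0 := by linarith
  have h0 : n ≠ 0 := by linarith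
  have h2 : n ^ (j + 1) - 1 ≠ 0 := by
    have : 1 < n ^ (j + 1) := one_lt_pow₀ (by linarith) (by omega)
    linarith
  have : ∀ k ∈ Finset.Icc 1 j, (n ^ (j + 1) - n ^ j) / (n ^ k * (n ^ (j + 1) - 1)) =
      (n ^ (j + 1) - n ^ j) / (n ^ (j + 1) - 1) * (1 / n ^ k) := by
    intro k _
    rw [div_mul_div_comm, mul_one, mul_comm (n ^ k)]
  rw [Finset.sum_congr rfl this, ← Finset.mul_sum, geom_sum_eq_aux n hn]
  field_simp
  ring

theorem local_bound (n : ℝ) (hn : 2 ≤ n) (h : ℕ) (hh : 2 ≤ h) :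
    0 ≤ (n - 1) / (n * (n ^ h - 1)) ∧ (n - 1) / (n * (n ^ h - 1)) ≤ 1 / n ^ 2 := by
  have h0 : 0 < n := by linarith
  have h2 : n ^ 2 ≤ n ^ h := pow_le_pow_right₀ (by linarith) hh
  have h3 : 0 < n ^ h - 1 := by nlinarith
  have h4 : 0 < n - 1 := by linarith
  refine ⟨by positivity, ?_⟩
  rw [div_le_div_iff₀ (by positivity) (by positivity)]
  nlinarith [mul_le_mul_of_nonneg_left h2 h0.le]

/-- Mertens-type estimate for the weighted prime sum arising in the `h`-free
first moment. -/
theorem hfree_prime_sum {P : Type*} [Countable P] (N : P → ℕ)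
    (hN : ∀ p, 2 ≤ N p) (κ θ : ℝ) (hstar : StarCond N κ θ)
    (A : ℝ) (hA : IsMertens N A) (h : ℕ) (hh : 2 ≤ h) :
    (fun x : ℝ =>
        (∑ᶠ p ∈ {p : P | (N p : ℝ) ≤ x},
            ∑ k ∈ Finset.Icc 1 (h - 1),
              ((N p : ℝ) ^ h - (N p : ℝ) ^ (h - 1)) /
                ((N p : ℝ) ^ k * ((N p : ℝ) ^ h - 1)))
          - Real.log (Real.log x) - C1const N h A)
      =O[atTop] fun x : ℝ => 1 / Real.log x := by
  have hfin := star_fin N κ θ hstar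
  have hset : ∀ x : ℝ, 0 ≤ x → {p : P | (N p : ℝ) ≤ x} = (Prf N hfin ⌊x⌋₊ : Set P) := by
    intro x hx
    ext p
    simp [mem_Prf, Nat.le_floor_iff hx]
  have hfs : ∀ (g : P → ℝ) (x : ℝ), 0 ≤ x →
      ∑ᶠ p ∈ {p : P | (N p : ℝ) ≤ x}, g p = ∑ p ∈ Prf N hfin ⌊x⌋₊, g p := by
    intro g x hx
    rw [hset x hx, finsum_mem_coe_finset]
  obtain ⟨R, hR⟩ := mertens_two N hN κ θ hstar hfin A (by
    refine Tendsto.congr' ?_ hA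
    filter_upwards [eventually_ge_atTop 0] with x hx
    exact congrArg (· - Real.log (Real.log x)) (hfs (fun p => 1 / (N p : ℝ)) x hx))
  obtain ⟨B, hB0, hB⟩ := three_half N hN κ θ hstar hfin
  set g : P → ℝ := fun p => ((N p : ℝ) - 1) / ((N p : ℝ) * ((N p : ℝ) ^ h - 1)) with hg
  have hn2 : ∀ p, (2:ℝ) ≤ N p := fun p => by exact_mod_cast hN p
  have hg0 : ∀ p, 0 ≤ g p := fun p => (local_bound (N p) (hn2 p) h hh).1
  have hg2 : ∀ p, g p ≤ (N p : ℝ) ^ (-(1 / 2) : ℝ) * (N p : ℝ) ^ (-(3 / 2) : ℝ) := fun p => by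
    have h0 : (0:ℝ) < N p := by linarith [hn2 p]
    refine (local_bound (N p) (hn2 p) h hh).2.trans (le_of_eq ?_)
    rw [← Real.rpow_add h0, one_div, ← Real.rpow_natCast, ← Real.rpow_neg h0.le]
    norm_num
  have hg3 : ∀ p, g p ≤ (N p : ℝ) ^ (-(3 / 2) : ℝ) := fun p => by
    refine (hg2 p).trans (mul_le_of_le_one_left (by positivity) ?_)
    exact Real.rpow_le_one_of_one_le_of_nonpos (by linarith [hn2 p]) (by norm_num)
  have hsum : Summable g := by
    refine summable_of_sum_le hg0 (c := B) fun T => ?_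
    exact (Finset.sum_le_sum fun p _ => hg3 p).trans (hB T)
  refine IsBigO.of_bound (|R| + 2 * B) ?_
  filter_upwards [eventually_ge_atTop 2] with x hx
  have h0 : (0:ℝ) < x := by linarith
  have hlx : 0 < Real.log x := Real.log_pos (by linarith)
  have m1 := hR x hx
  set X := Prf N hfin ⌊x⌋₊ with hX
  have e1 : ∑ᶠ p ∈ {p : P | (N p : ℝ) ≤ x}, ∑ k ∈ Finset.Icc 1 (h - 1),
      ((N p : ℝ) ^ h - (N p : ℝ) ^ (h - 1)) / ((N p : ℝ) ^ k * ((N p : ℝ) ^ h - 1)) =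
      ∑ p ∈ X, 1 / (N p : ℝ) - ∑ p ∈ X, g p := by
    rw [hfs _ x h0.le, ← Finset.sum_sub_distrib]
    exact Finset.sum_congr rfl fun p _ => local_id (N p) (hn2 p) h hh
  have t1 : ∑ p ∈ X, g p ≤ ∑' p, g p := hsum.sum_le_tsum X fun p _ => hg0 p
  have t2 : ∑' p, g p ≤ ∑ p ∈ X, g p + x ^ (-(1 / 2) : ℝ) * B := by
    refine hsum.tsum_le_of_sum_le fun T => ?_
    have : ∑ p ∈ T \ X, g p ≤ x ^ (-(1 / 2) : ℝ) * B := by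
      calc ∑ p ∈ T \ X, g p ≤ ∑ p ∈ T \ X, x ^ (-(1 / 2) : ℝ) * (N p : ℝ) ^ (-(3 / 2) : ℝ) := by
            refine Finset.sum_le_sum fun p hp => (hg2 p).trans ?_
            have hp := (Finset.mem_sdiff.mp hp).2
            rw [hX, mem_Prf, Nat.le_floor_iff h0.le, not_le] at hp
            refine mul_le_mul_of_nonneg_right ?_ (by positivity)
            exact Real.rpow_le_rpow_of_nonpos h0 hp.le (by norm_num)
        _ = x ^ (-(1 / 2) : ℝ) * ∑ p ∈ T \ X, (N p : ℝ) ^ (-(3 / 2) : ℝ) := by rw [Finset.mul_sum]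
        _ ≤ _ := by
            refine mul_le_mul_of_nonneg_left (hB _) (by positivity)
    calc ∑ p ∈ T, g p ≤ ∑ p ∈ X ∪ T \ X, g p :=
          Finset.sum_le_sum_of_subset_of_nonneg (fun p hp => by
            by_cases hpX : p ∈ X <;> simp [hp, hpX]) fun p _ _ => hg0 p
      _ = ∑ p ∈ X, g p + ∑ p ∈ T \ X, g p := Finset.sum_union Finset.disjoint_sdiff
      _ ≤ _ := by linarith
  have t3 : x ^ (-(1 / 2) : ℝ) ≤ 2 / Real.log x := by
    have := Real.log_le_rpow_div h0.le (show (0:ℝ) < 1 / 2 by norm_num)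
    rw [Real.rpow_neg h0.le, inv_eq_one_div, div_le_div_iff₀ (by positivity) hlx]
    linarith
  have t4 : x ^ (-(1 / 2) : ℝ) * B ≤ 2 * B / Real.log x := by
    calc _ ≤ 2 / Real.log x * B := mul_le_mul_of_nonneg_right t3 hB0
      _ = _ := by ring
  simp only [Set.mem_setOf_eq] at e1
  rw [e1, Real.norm_eq_abs, Real.norm_eq_abs, abs_of_pos (a := 1 / Real.log x) (by positivity)]
  have hC1 : C1const N h A = A - ∑' p, g p := rfl
  rw [hC1]
  have m2 : R / Real.log x ≤ |R| / Real.log x := by gcongr; exact le_abs_self R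
  have e2 : (|R| + 2 * B) * (1 / Real.log x) = |R| / Real.log x + 2 * B / Real.log x := by ring
  rw [e2]
  rw [abs_le] at *
  constructor <;> linarith
end
end

section
/- Under Condition (★), for every integer h ≥ 2 and every real s > 1/h, the series ∑_{m ∈ M, m h-full} N(m)^{−s} converges, the infinite product ∏_p (1 + N(p)^{−hs}/(1 − N(p)^{−s})) over prime elements p converges, and the two are equal. -/
open Filter Topology Asymptotics
open scoped Classical

noncomputable section

theorem aux_euler {P : Type*} (g : P → ℕ → ℝ) (f : P → ℝ) (hg0 : ∀ p, g p 0 = 1)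
    (hg : ∀ p k, 0 ≤ g p k) (hf : ∀ p, HasSum (g p) (1 + f p)) (hf0 : ∀ p, 0 ≤ f p)
    (hsum : Summable f) :
    Summable (fun m : P →₀ ℕ => m.prod g) ∧ Multipliable (fun p => 1 + f p) ∧
    ∑' m : P →₀ ℕ, m.prod g = ∏' p, (1 + f p) := by
  have hmul : Multipliable (fun p => 1 + f p) := Real.multipliable_one_add_of_summable hsum
  have h1 : ∀ p, 1 ≤ 1 + f p := fun p => by linarith [hf0 p]
  have hmono := Finset.prod_mono_set_of_one_le h1
  have hle : ∀ S : Finset P, ∏ p ∈ S, (1 + f p) ≤ ∏' p, (1 + f p) := fun S =>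
    hmono.ge_of_tendsto hmul.hasProd S
  have hbox : ∀ (S : Finset P) (t : P → Finset ℕ),
      ∑ m ∈ S.finsupp t, m.prod g = ∏ p ∈ S, ∑ k ∈ t p, g p k := by
    intro S t
    have e : ∀ m ∈ S.finsupp t, m.prod g = ∏ p ∈ S, g p (m p) := fun m hm =>
      Finsupp.prod_of_support_subset m (Finset.mem_finsupp_iff.1 hm).1 g (fun p _ => hg0 p)
    rw [Finset.sum_congr rfl e, Finset.prod_sum, Finset.finsupp, Finset.sum_map]
    apply Finset.sum_congr (by congr!)
    intro x _
    rw [← Finset.prod_attach]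
    apply Finset.prod_congr rfl
    intro p _
    simp only [Function.Embedding.coeFn_mk]
    rw [Finsupp.indicator_of_mem p.2]
  have hF : ∀ m : P →₀ ℕ, 0 ≤ m.prod g := fun m => Finset.prod_nonneg fun p _ => hg p _
  have hub : ∀ T : Finset (P →₀ ℕ), ∑ m ∈ T, m.prod g ≤ ∏' p, (1 + f p) := by
    intro T
    let S : Finset P := T.biUnion fun m => m.support
    let t : P → Finset ℕ := fun p => T.image fun m => m p
    have hsub : T ⊆ S.finsupp t := by
      intro m hm
      rw [Finset.mem_finsupp_iff]
      refine ⟨Finset.subset_biUnion_of_mem (fun m : P →₀ ℕ => m.support) hm, fun p _ => ?_⟩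
      exact Finset.mem_image_of_mem _ hm
    calc ∑ m ∈ T, m.prod g ≤ ∑ m ∈ S.finsupp t, m.prod g :=
          Finset.sum_le_sum_of_subset_of_nonneg hsub fun m _ _ => hF m
      _ = ∏ p ∈ S, ∑ k ∈ t p, g p k := hbox S t
      _ ≤ ∏ p ∈ S, (1 + f p) := Finset.prod_le_prod
          (fun p _ => Finset.sum_nonneg fun k _ => hg p k)
          (fun p _ => sum_le_hasSum _ (fun k _ => hg p k) (hf p))
      _ ≤ _ := hle S
  have hS : Summable (fun m : P →₀ ℕ => m.prod g) := summable_of_sum_le hF hub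
  refine ⟨hS, hmul, le_antisymm (hS.tsum_le_of_sum_le hub) ?_⟩
  refine le_of_tendsto' hmul.hasProd fun S => ?_
  have ht : Tendsto (fun n : ℕ => ∏ p ∈ S, ∑ k ∈ Finset.range n, g p k) atTop
      (𝓝 (∏ p ∈ S, (1 + f p))) :=
    tendsto_finsetProd _ fun p _ => (hf p).tendsto_sum_nat
  refine le_of_tendsto' ht fun n => ?_
  rw [← hbox S fun _ => Finset.range n]
  exact hS.sum_le_tsum _ fun m _ => hF m

theorem aux_dyadic {P : Type*} (N : P → ℕ) (hN : ∀ p, 2 ≤ N p) (C : ℝ)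
    (hfin : ∀ n : ℕ, {p | N p ≤ n}.Finite)
    (hC : ∀ n : ℕ, 1 ≤ n → ({p | N p ≤ n}.ncard : ℝ) ≤ C * n) (σ : ℝ) (hσ : 1 < σ) :
    Summable fun p => (N p : ℝ) ^ (-σ) := by
  set r : ℝ := 2 ^ (1 - σ) with hr
  have hr0 : 0 < r := by positivity
  have hr1 : r < 1 := Real.rpow_lt_one_of_one_lt_of_neg (by norm_num) (by linarith)
  have hg := (summable_geometric_of_lt_one hr0.le hr1).mul_left (2 * C)
  have hC0 : 0 ≤ C := by
    have := hC 1 le_rfl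
    have h2 : (0 : ℝ) ≤ ({p | N p ≤ 1}.ncard : ℝ) := by positivity
    norm_num at this h2 ⊢
    linarith
  refine summable_of_sum_le (c := ∑' k : ℕ, 2 * C * r ^ k)
    (fun p => by positivity) fun u => ?_
  rw [← Finset.sum_fiberwise_of_maps_to (s := u) (t := u.image fun p => Nat.log 2 (N p))
    (g := fun p => Nat.log 2 (N p)) (fun p hp => Finset.mem_image_of_mem _ hp)]
  refine le_trans (Finset.sum_le_sum fun k _ => ?_)
    (hg.sum_le_tsum _ fun k _ => by positivity)
  have hcard : (((u.filter fun p => Nat.log 2 (N p) = k).card : ℕ) : ℝ) ≤ C * (2 ^ (k + 1) : ℕ) := by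
    refine le_trans ?_ (hC (2 ^ (k + 1)) Nat.one_le_two_pow)
    rw [← Set.ncard_coe_finset]
    refine Nat.cast_le.2 (Set.ncard_le_ncard (fun p hp => ?_) (hfin _))
    have hp' := (Finset.mem_filter.1 (Finset.mem_coe.1 hp)).2
    change N p ≤ 2 ^ (k + 1)
    rw [← hp']
    exact (Nat.lt_pow_succ_log_self (by norm_num) _).le
  calc _ ≤ (u.filter fun p => Nat.log 2 (N p) = k).card • ((2 : ℝ) ^ k) ^ (-σ) := by
        refine Finset.sum_le_card_nsmul _ _ _ fun p hp => ?_
        rw [Finset.mem_filter] at hp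
        refine Real.rpow_le_rpow_of_nonpos (by positivity) ?_ (by linarith)
        have := Nat.pow_log_le_self 2 (x := N p) (by have := hN p; omega)
        rw [hp.2] at this
        exact_mod_cast this
    _ ≤ (C * (2 ^ (k + 1) : ℕ)) * ((2 : ℝ) ^ k) ^ (-σ) := by
        rw [nsmul_eq_mul]
        gcongr
    _ = 2 * C * r ^ k := by
        have : r ^ k = 2 ^ k * ((2 : ℝ) ^ k) ^ (-σ) := by
          rw [hr, ← Real.rpow_natCast, ← Real.rpow_natCast, ← Real.rpow_mul (by norm_num),
            ← Real.rpow_mul (by norm_num), ← Real.rpow_add (by norm_num)]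
          congr 1; ring
        rw [this]; push_cast; ring

theorem aux_star {P : Type*} (N : P → ℕ) (κ θ : ℝ) (hstar : StarCond N κ θ) :
    (∀ x : ℝ, {m : P →₀ ℕ | (Nm N m : ℝ) ≤ x}.Finite) ∧
    ∃ C : ℝ, ∀ x : ℝ, 1 ≤ x → ({m : P →₀ ℕ | (Nm N m : ℝ) ≤ x}.ncard : ℝ) ≤ C * x := by
  obtain ⟨hκ, hθ0, hθ, hO⟩ := hstar
  have hlo : (fun x : ℝ => x ^ θ) =o[atTop] fun x : ℝ => x := by
    have h1 : Tendsto (fun x : ℝ => x ^ (-(1 - θ))) atTop (𝓝 0) :=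
      tendsto_rpow_neg_atTop (by linarith)
    refine (isLittleO_iff_tendsto' ?_).2 (h1.congr' ?_)
    · filter_upwards [eventually_gt_atTop 0] with x hx h0
      exact absurd h0 hx.ne'
    · filter_upwards [eventually_gt_atTop 0] with x hx
      rw [neg_sub, Real.rpow_sub hx, Real.rpow_one]
  have hev := (hO.trans_isLittleO hlo).def (c := κ / 2) (by positivity)
  obtain ⟨X, hX⟩ := eventually_atTop.1 (hev.and (eventually_ge_atTop 1))
  have hX1 := (hX X le_rfl).2
  have hb : ∀ x, X ≤ x → κ / 2 * x ≤ ({m : P →₀ ℕ | (Nm N m : ℝ) ≤ x}.ncard : ℝ) ∧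
      ({m : P →₀ ℕ | (Nm N m : ℝ) ≤ x}.ncard : ℝ) ≤ 3 * κ / 2 * x := by
    intro x hx
    obtain ⟨h1, h2⟩ := hX x hx
    rw [Real.norm_eq_abs, Real.norm_eq_abs, abs_of_pos (by linarith : 0 < x), abs_le] at h1
    constructor <;> linarith
  have hmono : ∀ x y : ℝ, x ≤ y →
      {m : P →₀ ℕ | (Nm N m : ℝ) ≤ x} ⊆ {m : P →₀ ℕ | (Nm N m : ℝ) ≤ y} :=
    fun x y hxy m hm => le_trans hm hxy
  have hfin : ∀ x : ℝ, {m : P →₀ ℕ | (Nm N m : ℝ) ≤ x}.Finite := by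
    intro x
    refine Set.Finite.subset ?_ (hmono x (max x X) (le_max_left _ _))
    apply Set.finite_of_ncard_pos
    have h1 := (hb (max x X) (le_max_right _ _)).1
    have h2 : 0 < max x X := lt_of_lt_of_le (by linarith) (le_max_right x X)
    have : (0 : ℝ) < ({m : P →₀ ℕ | (Nm N m : ℝ) ≤ max x X}.ncard : ℝ) :=
      lt_of_lt_of_le (by positivity) h1
    exact_mod_cast this
  refine ⟨hfin, 3 * κ / 2 * X, fun x hx => ?_⟩
  have h1 := (hb (max x X) (le_max_right _ _)).2
  have h2 : ({m : P →₀ ℕ | (Nm N m : ℝ) ≤ x}.ncard : ℝ) ≤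
      ({m : P →₀ ℕ | (Nm N m : ℝ) ≤ max x X}.ncard : ℝ) := by
    exact_mod_cast Set.ncard_le_ncard (hmono x _ (le_max_left _ _)) (hfin _)
  have h3 : max x X ≤ X * x := max_le (by nlinarith) (by nlinarith)
  calc _ ≤ _ := h2.trans h1
    _ ≤ 3 * κ / 2 * (X * x) := by gcongr
    _ = _ := by ring

theorem aux_sum {P : Type*} (N : P → ℕ) (hN : ∀ p, 2 ≤ N p) (κ θ : ℝ) (hstar : StarCond N κ θ)
    (σ : ℝ) (hσ : 1 < σ) : Summable fun p => (N p : ℝ) ^ (-σ) := by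
  obtain ⟨hfin, C, hC⟩ := aux_star N κ θ hstar
  let e : P → (P →₀ ℕ) := fun p => Finsupp.single p 1
  have he : Function.Injective e := Finsupp.single_left_injective one_ne_zero
  have hNe : ∀ p, Nm N (e p) = N p := fun p => by simp [Nm, e]
  have hset : ∀ n : ℕ, {p | N p ≤ n} = e ⁻¹' {m : P →₀ ℕ | (Nm N m : ℝ) ≤ n} := by
    intro n; ext p; simp [hNe]
  refine aux_dyadic N hN C (fun n => ?_) (fun n hn => ?_) σ hσ
  · rw [hset]; exact (hfin n).preimage he.injOn
  · refine le_trans ?_ (hC n (by exact_mod_cast hn))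
    rw [hset, ← Set.ncard_image_of_injective _ he]
    exact_mod_cast Set.ncard_le_ncard (Set.image_preimage_subset _ _) (hfin n)

theorem aux_geom (q : ℝ) (h0 : 0 ≤ q) (h1 : q < 1) (h : ℕ) (hh : 2 ≤ h) :
    HasSum (fun k : ℕ => if k = 0 ∨ h ≤ k then q ^ k else 0) (1 + q ^ h / (1 - q)) := by
  have ha : HasSum (fun k : ℕ => if k = 0 then (1 : ℝ) else 0) 1 := hasSum_ite_eq 0 1
  have hb : HasSum (fun k : ℕ => if h ≤ k then q ^ k else 0) (q ^ h / (1 - q)) := by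
    rw [← hasSum_nat_add_iff' h]
    rw [Finset.sum_eq_zero (fun i hi => by
      rw [if_neg]; have := Finset.mem_range.1 hi; omega)]
    have := (hasSum_geometric_of_lt_one h0 h1).mul_left (q ^ h)
    simpa [pow_add, mul_comm, div_eq_mul_inv] using this
  refine (ha.add hb).congr_fun ?_
  intro k
  rcases Nat.eq_zero_or_pos k with rfl | hk
  · simp; omega
  · simp [hk.ne']

/-- Euler product for the generating series of `h`-full elements, valid for
`s > 1/h`. -/
theorem hfull_euler_product {P : Type*} [Countable P] (N : P → ℕ)
    (hN : ∀ p, 2 ≤ N p) (κ θ : ℝ) (hstar : StarCond N κ θ)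
    (h : ℕ) (hh : 2 ≤ h) (s : ℝ) (hs : 1 / (h : ℝ) < s) :
    Summable (fun m : {m : P →₀ ℕ // HFull h m} => 1 / (Nm N m.val : ℝ) ^ s) ∧
    Multipliable (fun p : P =>
      1 + (N p : ℝ) ^ (-((h : ℝ) * s)) / (1 - (N p : ℝ) ^ (-s))) ∧
    (∑' m : {m : P →₀ ℕ // HFull h m}, 1 / (Nm N m.val : ℝ) ^ s)
      = ∏' p : P, (1 + (N p : ℝ) ^ (-((h : ℝ) * s)) / (1 - (N p : ℝ) ^ (-s))) := by
  have hh0 : (0 : ℝ) < h := by positivity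
  have hs0 : 0 < s := lt_trans (by positivity) hs
  have hhs : 1 < h * s := by
    rw [div_lt_iff₀ hh0] at hs; linarith
  have hNp : ∀ p, (2 : ℝ) ≤ N p := fun p => by exact_mod_cast hN p
  have hq0 : ∀ p, 0 < (N p : ℝ) ^ (-s) := fun p =>
    Real.rpow_pos_of_pos (by linarith [hNp p]) _
  have hq2 : ∀ p, (N p : ℝ) ^ (-s) ≤ 2 ^ (-s) := fun p =>
    Real.rpow_le_rpow_of_nonpos (by norm_num) (hNp p) (by linarith)
  have h21 : (2 : ℝ) ^ (-s) < 1 :=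
    Real.rpow_lt_one_of_one_lt_of_neg (by norm_num) (by linarith)
  have hqh : ∀ p, ((N p : ℝ) ^ (-s)) ^ h = (N p : ℝ) ^ (-((h : ℝ) * s)) := fun p => by
    rw [← Real.rpow_natCast, ← Real.rpow_mul (by positivity)]
    congr 1; ring
  have hf0 : ∀ p, 0 ≤ (N p : ℝ) ^ (-((h : ℝ) * s)) / (1 - (N p : ℝ) ^ (-s)) := fun p =>
    div_nonneg (by positivity) (by linarith [hq2 p])
  have hsum : Summable fun p => (N p : ℝ) ^ (-((h : ℝ) * s)) / (1 - (N p : ℝ) ^ (-s)) := by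
    refine Summable.of_nonneg_of_le hf0 (fun p => ?_)
      ((aux_sum N hN κ θ hstar _ hhs).div_const (1 - 2 ^ (-s)))
    exact div_le_div_of_nonneg_left (by positivity) (by linarith) (by linarith [hq2 p])
  obtain ⟨hS, hM, hE⟩ := aux_euler
    (fun p k => if k = 0 ∨ h ≤ k then ((N p : ℝ) ^ (-s)) ^ k else 0)
    (fun p => (N p : ℝ) ^ (-((h : ℝ) * s)) / (1 - (N p : ℝ) ^ (-s)))
    (fun p => by simp)
    (fun p k => by
      have := hq0 p
      split_ifs <;> positivity)
    (fun p => by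
      have := aux_geom _ (hq0 p).le ((hq2 p).trans_lt h21) h hh
      rwa [hqh] at this) hf0 hsum
  have key : (fun m : P →₀ ℕ => m.prod
      (fun p k => if k = 0 ∨ h ≤ k then ((N p : ℝ) ^ (-s)) ^ k else 0)) =
      Set.indicator {m : P →₀ ℕ | HFull h m} (fun m => 1 / (Nm N m : ℝ) ^ s) := by
    funext m
    by_cases hm : HFull h m
    · rw [Set.indicator_of_mem (by exact hm)]
      have hNm : (Nm N m : ℝ) = ∏ p ∈ m.support, (N p : ℝ) ^ (m p) := by
        simp [Nm, Finsupp.prod]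
      rw [hNm, one_div, ← Real.rpow_neg (Finset.prod_nonneg fun p _ => by positivity),
        ← Real.finsetProd_rpow _ _ (fun p _ => by positivity), Finsupp.prod]
      refine Finset.prod_congr rfl fun p _ => ?_
      rw [if_pos (hm p), ← Real.rpow_natCast, ← Real.rpow_natCast, ← Real.rpow_mul (by positivity),
        ← Real.rpow_mul (by positivity), mul_comm]
    · rw [Set.indicator_of_notMem (by exact hm)]
      have hm' := hm
      simp only [HFull, not_forall] at hm'
      obtain ⟨p, hp⟩ := hm'
      refine Finset.prod_eq_zero (i := p) ?_ (if_neg hp)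
      rw [Finsupp.mem_support_iff]
      exact fun h0 => hp (Or.inl h0)
  rw [key] at hS hE
  refine ⟨summable_subtype_iff_indicator.2 hS, hM, ?_⟩
  rw [← hE]
  exact tsum_subtype {m : P →₀ ℕ | HFull h m} (fun m => 1 / (Nm N m : ℝ) ^ s)
end
end
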